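/- arXiv:1604.02486 — 6 statements merged into one kernel-verified Lean document; each statement's English description precedes it below -/
import Mathlib

section
/- Let x be a feasible solution of the subtour elimination LP for s–t path TSP. Let U_1, U_2 ⊆ V with s ∈ U_1 ∩ U_2 and t ∉ U_1 ∪ U_2, and suppose both cuts δ(U_1) and δ(U_2) are narrow, i.e. x(δ(U_1)) < 2 and x(δ(U_2)) < 2. Then U_1 ⊆ U_2 or U_2 ⊆ U_1. -/
/-!
If neither set contains the other, then `U₁ \ U₂` and `U₂ \ U₁` are nonempty and avoid both `s`
and `t`, so the LP gives each of their cuts value at least `2`. The cut function of a nonnegative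
vector is posimodular (`cut_posimodular`), so the cuts of `U₁` and `U₂` have total value at
least `4`, whereas two narrow cuts have total value less than `4`.
-/

open Finset

noncomputable section
open scoped Classical

/-- `δ(U)`: the set of edges (unordered pairs of distinct vertices) with exactly one
endpoint in `U`. -/
def cutEdges {V : Type*} [Fintype V] (U : Finset V) : Finset (Sym2 V) :=
  Finset.univ.filter fun e => ∃ u v : V, e = s(u, v) ∧ u ∈ U ∧ v ∉ U

/-- `f(U) = 1` if `|U ∩ {s,t}| = 1` and `f(U) = 2` otherwise. -/
def lpBound {V : Type*} [Fintype V] (s t : V) (U : Finset V) : ℝ :=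
  if (U ∩ {s, t}).card = 1 then 1 else 2

/-- `x` is a feasible solution of the subtour elimination LP for `s`–`t` path TSP. -/
def SubtourLP {V : Type*} [Fintype V] (s t : V) (x : Sym2 V → ℝ) : Prop :=
  (∀ e : Sym2 V, 0 ≤ x e) ∧
  (∀ v : V, ∑ e ∈ cutEdges {v}, x e = lpBound s t {v}) ∧
  (∀ U : Finset V, U.Nonempty → U ≠ Finset.univ → lpBound s t U ≤ ∑ e ∈ cutEdges U, x e)

lemma mem_cutEdges_mk {V : Type*} [Fintype V] (U : Finset V) (a b : V) :
    s(a, b) ∈ cutEdges U ↔ (a ∈ U ∧ b ∉ U) ∨ (b ∈ U ∧ a ∉ U) := by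
  simp only [cutEdges, Finset.mem_filter, Finset.mem_univ, true_and, Sym2.eq_iff]
  constructor
  · rintro ⟨u, v, ⟨rfl, rfl⟩ | ⟨rfl, rfl⟩, hu, hv⟩
    · exact Or.inl ⟨hu, hv⟩
    · exact Or.inr ⟨hu, hv⟩
  · rintro (⟨h, h'⟩ | ⟨h, h'⟩)
    · exact ⟨a, b, Or.inl ⟨rfl, rfl⟩, h, h'⟩
    · exact ⟨b, a, Or.inr ⟨rfl, rfl⟩, h, h'⟩

/-- Posimodularity of the cut function. It holds edge by edge: no edge is counted more often on
the left than on the right. -/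
lemma cut_posimodular {V : Type*} [Fintype V] (x : Sym2 V → ℝ) (hx : ∀ e, 0 ≤ x e)
    (A B : Finset V) :
    ∑ e ∈ cutEdges (A \ B), x e + ∑ e ∈ cutEdges (B \ A), x e
      ≤ ∑ e ∈ cutEdges A, x e + ∑ e ∈ cutEdges B, x e := by
  have key : ∀ U : Finset V,
      ∑ e ∈ cutEdges U, x e = ∑ e, if e ∈ cutEdges U then x e else 0 := by
    intro U
    simp
  simp only [key, ← Finset.sum_add_distrib]
  refine Finset.sum_le_sum fun e _ => ?_
  have he := hx e
  induction e using Sym2.ind with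
  | _ a b =>
    simp only [mem_cutEdges_mk, Finset.mem_sdiff]
    by_cases h1 : a ∈ A <;> by_cases h2 : a ∈ B <;> by_cases h3 : b ∈ A <;>
      by_cases h4 : b ∈ B <;> simp [h1, h2, h3, h4, he]

lemma two_le_cut_of_avoids {V : Type*} [Fintype V] {s t : V} {x : Sym2 V → ℝ}
    (hx : SubtourLP s t x) {U : Finset V} (hne : U.Nonempty) (hs : s ∉ U) (ht : t ∉ U) :
    2 ≤ ∑ e ∈ cutEdges U, x e := by
  have h := hx.2.2 U hne (fun h => hs (h ▸ Finset.mem_univ s))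
  have h0 : U ∩ {s, t} = ∅ := by
    ext v
    simp only [Finset.mem_inter, Finset.mem_insert, Finset.mem_singleton, Finset.notMem_empty,
      iff_false, not_and]
    rintro hv (rfl | rfl) <;> contradiction
  simpa [lpBound, h0] using h

/-- Narrow `s`–`t` cuts form a chain. -/
theorem narrow_cuts_chain {V : Type*} [Fintype V] (s t : V) (hst : s ≠ t)
    (x : Sym2 V → ℝ) (hx : SubtourLP s t x)
    (U₁ U₂ : Finset V) (hs1 : s ∈ U₁) (hs2 : s ∈ U₂) (ht1 : t ∉ U₁) (ht2 : t ∉ U₂)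
    (h1 : ∑ e ∈ cutEdges U₁, x e < 2) (h2 : ∑ e ∈ cutEdges U₂, x e < 2) :
    U₁ ⊆ U₂ ∨ U₂ ⊆ U₁ := by
  by_contra hcon
  rw [not_or] at hcon
  have hA := two_le_cut_of_avoids hx (Finset.sdiff_nonempty.mpr hcon.1)
    (by simp [hs2]) (by simp [ht1])
  have hB := two_le_cut_of_avoids hx (Finset.sdiff_nonempty.mpr hcon.2)
    (by simp [hs1]) (by simp [ht2])
  have hP := cut_posimodular x hx.1 U₁ U₂
  linarith
end
end

section
/- Let J and I be finite sets, let N assign to each i ∈ I a subset N(i) ⊆ J, let w : J → ℝ with w(j) ≥ 0 for all j, and let r : I → ℝ. Then the following are equivalent: (1) there exists z : J × I → ℝ with z(j,i) ≥ 0 for all j, i, z(j,i) = 0 whenever j ∉ N(i), ∑_{i ∈ I} z(j,i) ≤ 1 for every j ∈ J, and ∑_{j ∈ N(i)} w(j)·z(j,i) ≥ r(i) for every i ∈ I; (2) for every subset I′ ⊆ I, ∑_{i ∈ I′} r(i) ≤ ∑_{j ∈ ∪_{i ∈ I′} N(i)} w(j). -/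
/-!
Necessity is double counting: the demand of `I'` is served only by nodes of its neighbourhood,
and each of those ships a total fraction of at most one.

For sufficiency, the delivery vectors `i ↦ ∑ j ∈ N i, w j * z j i` of admissible plans `z` form a
compact convex set. If it misses the closed orthant `{x | r ≤ x}`, a hyperplane with normal `y`
strictly separates the two, and `y ≥ 0` because the orthant is unbounded upwards. Letting every
supply node `j` ship everything to an incident `i` with `y i` maximal (`exists_greedy`) gives
`∑ j, w j * M j < ∑ i, y i * r i`, where `M j` is that maximum. But the Hall-type condition implies
the opposite inequality: decompose `y` into indicators of its superlevel sets
(`weighted_hall`).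
-/

open Finset

/-- The Hall-type condition extends from indicator vectors to all pairs `(y, M)` of nonnegative
weights with `y i ≤ M j` on incident pairs. By induction on the support `S` of `y`: subtract
`min_S y` from `y` on `S` and from `M` on the neighbourhood of `S`, which shrinks the support. -/
lemma weighted_hall {J I : Type*} [Fintype J] [Fintype I]
    [DecidableEq J] (N : I → Finset J) (w : J → ℝ) (hw : ∀ j, 0 ≤ w j) (r : I → ℝ)
    (h : ∀ I' : Finset I, ∑ i ∈ I', r i ≤ ∑ j ∈ I'.biUnion N, w j) (S : Finset I) :
    ∀ (y : I → ℝ) (M : J → ℝ), (∀ i ∈ S, 0 < y i) → (∀ i ∉ S, y i = 0) → (∀ j, 0 ≤ M j) →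
      (∀ i, ∀ j ∈ N i, y i ≤ M j) → ∑ i, y i * r i ≤ ∑ j, w j * M j := by
  classical
  induction S using Finset.strongInduction with
  | H S ih =>
  intro y M hpos hzero hM hyM
  rcases S.eq_empty_or_nonempty with rfl | hS
  · have h0 : ∑ i, y i * r i = 0 := Finset.sum_eq_zero fun i _ => by simp [hzero i]
    rw [h0]
    exact Finset.sum_nonneg fun j _ => mul_nonneg (hw j) (hM j)
  obtain ⟨a, haS, ha⟩ := S.exists_min_image y hS
  have ha0 := hpos a haS
  let y' : I → ℝ := fun i => y i - if i ∈ S then y a else 0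
  let M' : J → ℝ := fun j => M j - if j ∈ S.biUnion N then y a else 0
  have key := ih (S.filter fun i => y a < y i)
    (Finset.filter_ssubset.2 ⟨a, haS, lt_irrefl _⟩) y' M'
    (fun i hi => by
      obtain ⟨h1, h2⟩ := Finset.mem_filter.1 hi
      simp only [y', h1, if_true]; linarith)
    (fun i hi => by
      by_cases hiS : i ∈ S
      · have h1 : ¬ y a < y i := fun hlt => hi (Finset.mem_filter.2 ⟨hiS, hlt⟩)
        simp only [y', hiS, if_true]; linarith [ha i hiS]
      · simp [y', hiS, hzero i hiS])
    (fun j => by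
      by_cases hj : j ∈ S.biUnion N
      · obtain ⟨i, hi, hij⟩ := Finset.mem_biUnion.1 hj
        simp only [M', hj, if_true]; linarith [ha i hi, hyM i j hij]
      · simp only [M', hj, if_false]; linarith [hM j])
    (fun i j hij => by
      by_cases hiS : i ∈ S
      · have hj : j ∈ S.biUnion N := Finset.mem_biUnion.2 ⟨i, hiS, hij⟩
        simp only [y', M', hiS, hj, if_true]; linarith [hyM i j hij]
      · by_cases hj : j ∈ S.biUnion N
        · obtain ⟨k, hk, hkj⟩ := Finset.mem_biUnion.1 hj
          simp only [y', M', hiS, hj, if_true, if_false, hzero i hiS]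
          linarith [ha k hk, hyM k j hkj]
        · simp only [y', M', hiS, hj, if_false]; linarith [hyM i j hij])
  have e1 : ∑ i, y' i * r i = ∑ i, y i * r i - y a * ∑ i ∈ S, r i := by
    simp [y', sub_mul, Finset.sum_sub_distrib, ite_mul, Finset.mul_sum]
  have e2 : ∑ j, w j * M' j = ∑ j, w j * M j - y a * ∑ j ∈ S.biUnion N, w j := by
    simp only [M', mul_sub, Finset.sum_sub_distrib, mul_ite, mul_zero, Finset.sum_mul,
      Finset.sum_ite_mem, Finset.univ_inter, mul_comm (y a)]
  have := mul_le_mul_of_nonneg_left (h S) ha0.le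
  linarith

/-- A supply node can put all its capacity on an incident demand node of maximal weight; `m` is
that weight, or `0` if nothing is incident to `j`. -/
lemma exists_greedy {J I : Type*} [Fintype I] (N : I → Finset J) (y : I → ℝ)
    (hy : ∀ i, 0 ≤ y i) (j : J) :
    ∃ (p : I → ℝ) (m : ℝ), (∀ i, 0 ≤ p i) ∧ (∀ i, j ∉ N i → p i = 0) ∧ ∑ i, p i ≤ 1 ∧
      0 ≤ m ∧ (∀ i, j ∈ N i → y i ≤ m) ∧ ∑ i, y i * p i = m := by
  classical
  rcases (Finset.univ.filter fun i => j ∈ N i).eq_empty_or_nonempty with h | h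
  · refine ⟨0, 0, by simp, by simp, by simp, le_rfl, fun i hi => ?_, by simp⟩
    have : i ∈ Finset.univ.filter fun i => j ∈ N i := by simpa using hi
    simp [h] at this
  · obtain ⟨a, ha, hmax⟩ := Finset.exists_max_image _ y h
    have haN : j ∈ N a := by simpa using ha
    refine ⟨fun i => if i = a then 1 else 0, y a, fun i => by positivity, fun i hi => ?_,
      by simp, hy a, fun i hi => hmax i (by simpa using hi), by simp⟩
    exact if_neg fun e : i = a => hi (e ▸ haN)

/-- A König–Hall / transportation-type feasibility criterion: demands `r i` can be
fractionally met from supplies `w j` (each supply node having capacity `1`) along the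
incidence structure `N` if and only if every set of demand nodes is dominated by the
total supply of its neighbourhood. -/
theorem transportation_feasibility {J I : Type*} [Fintype J] [Fintype I]
    [DecidableEq J] (N : I → Finset J) (w : J → ℝ) (hw : ∀ j, 0 ≤ w j) (r : I → ℝ) :
    (∃ z : J → I → ℝ,
        (∀ j i, 0 ≤ z j i) ∧
        (∀ j i, j ∉ N i → z j i = 0) ∧
        (∀ j, ∑ i : I, z j i ≤ 1) ∧
        (∀ i, r i ≤ ∑ j ∈ N i, w j * z j i)) ↔
      ∀ I' : Finset I, ∑ i ∈ I', r i ≤ ∑ j ∈ I'.biUnion N, w j := by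
  classical
  constructor
  · rintro ⟨z, hz0, -, hz1, hzr⟩ I'
    calc ∑ i ∈ I', r i ≤ ∑ i ∈ I', ∑ j ∈ N i, w j * z j i := Finset.sum_le_sum fun i _ => hzr i
      _ ≤ ∑ i ∈ I', ∑ j ∈ I'.biUnion N, w j * z j i := Finset.sum_le_sum fun i hi =>
          Finset.sum_le_sum_of_subset_of_nonneg (Finset.subset_biUnion_of_mem N hi)
            fun j _ _ => mul_nonneg (hw j) (hz0 j i)
      _ = ∑ j ∈ I'.biUnion N, w j * ∑ i ∈ I', z j i := by
          rw [Finset.sum_comm]; simp only [Finset.mul_sum]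
      _ ≤ ∑ j ∈ I'.biUnion N, w j := Finset.sum_le_sum fun j _ =>
          mul_le_of_le_one_right (hw j) ((Finset.sum_le_sum_of_subset_of_nonneg
            (Finset.subset_univ I') fun i _ _ => hz0 j i).trans (hz1 j))
  intro h
  let Z : Set (J → I → ℝ) := {z | (∀ j i, 0 ≤ z j i) ∧ (∀ j i, j ∉ N i → z j i = 0) ∧
    ∀ j, ∑ i : I, z j i ≤ 1}
  -- On `Z` the sum over `N i` equals the sum over all of `J`, which is easier to rearrange.
  let L : (J → I → ℝ) →ₗ[ℝ] (I → ℝ) :=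
    { toFun := fun z i => ∑ j, w j * z j i
      map_add' := fun a b => by ext i; simp [mul_add, Finset.sum_add_distrib]
      map_smul' := fun c a => by
        ext i; simp only [Pi.smul_apply, smul_eq_mul, Finset.mul_sum, RingHom.id_apply]
        exact Finset.sum_congr rfl fun j _ => by ring }
  by_contra hno
  have hZconv : Convex ℝ Z := by
    rintro a ⟨ha0, haN, ha1⟩ b ⟨hb0, hbN, hb1⟩ s t hs ht hst
    refine ⟨fun j i => ?_, fun j i hji => ?_, fun j => ?_⟩
    · have := ha0 j i
      have := hb0 j i
      simp only [Pi.add_apply, Pi.smul_apply, smul_eq_mul]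
      positivity
    · simp [haN j i hji, hbN j i hji]
    · simp only [Pi.add_apply, Pi.smul_apply, smul_eq_mul, Finset.sum_add_distrib,
        ← Finset.mul_sum]
      nlinarith [mul_le_mul_of_nonneg_left (ha1 j) hs, mul_le_mul_of_nonneg_left (hb1 j) ht]
  have hZclosed : IsClosed Z := by
    simp only [Z, Set.ofPred_and, Set.ofPred_forall]
    refine .inter ?_ (.inter ?_ ?_)
    · exact isClosed_iInter fun j => isClosed_iInter fun i =>
        isClosed_le continuous_const (by fun_prop)
    · exact isClosed_iInter fun j => isClosed_iInter fun i => isClosed_iInter fun _ =>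
        isClosed_eq (by fun_prop) continuous_const
    · exact isClosed_iInter fun j => isClosed_le (by fun_prop) continuous_const
  have hZcomp : IsCompact Z := by
    refine (isCompact_Icc (a := (0 : J → I → ℝ)) (b := 1)).of_isClosed_subset hZclosed ?_
    rintro z ⟨h0, -, h1⟩
    exact ⟨fun j i => h0 j i, fun j i =>
      (Finset.single_le_sum (f := z j) (fun k _ => h0 j k) (Finset.mem_univ i)).trans (h1 j)⟩
  have hdisj : Disjoint (L '' Z) (Set.Ici r) := by
    rw [Set.disjoint_left]
    rintro _ ⟨z, ⟨h0, hN, h1⟩, rfl⟩ hr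
    refine hno ⟨z, h0, hN, h1, fun i => (hr i).trans (le_of_eq ?_)⟩
    exact (Finset.sum_subset (Finset.subset_univ _) fun j _ hj => by simp [hN j i hj]).symm
  obtain ⟨f, u, v, hfu, huv, hfv⟩ := geometric_hahn_banach_compact_closed
    (hZconv.linear_image L) (hZcomp.image L.continuous_of_finiteDimensional)
    (convex_Ici r) isClosed_Ici hdisj
  let y : I → ℝ := fun i => f (Pi.single i 1)
  have hf : ∀ x : I → ℝ, f x = ∑ i, y i * x i := fun x => by
    conv_lhs => rw [pi_eq_sum_univ' x]
    simp only [map_sum, map_smul, smul_eq_mul, y]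
    refine Finset.sum_congr rfl fun i _ => ?_
    rw [mul_comm]
  have hfr : v < f r := hfv r Set.self_mem_Ici
  have hy : ∀ i, 0 ≤ y i := by
    intro i
    by_contra! hneg
    -- Moving up from `r` along coordinate `i` by `(f r - v) / (-y i)` lands on `f = v`.
    have ht : 0 ≤ (f r - v) / (-y i) := div_nonneg (by linarith) (by linarith)
    have := hfv (r + ((f r - v) / (-y i)) • Pi.single i 1)
      (Set.mem_Ici.2 (le_add_of_nonneg_right (smul_nonneg ht (Pi.single_nonneg.2 zero_le_one))))
    rw [map_add, map_smul, smul_eq_mul] at this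
    change v < f r + (f r - v) / (-y i) * y i at this
    have e : (f r - v) / (-y i) * y i = -(f r - v) := by
      have := hneg.ne
      field_simp
    linarith
  choose p M hp0 hpN hp1 hM0 hyM hpM using exists_greedy N y hy
  have hlt := hfu (L p) ⟨p, ⟨hp0, hpN, hp1⟩, rfl⟩
  have hLp : f (L p) = ∑ j, w j * M j := by
    rw [hf]
    simp only [L, LinearMap.coe_mk, AddHom.coe_mk, Finset.mul_sum, ← hpM]
    rw [Finset.sum_comm]
    exact Finset.sum_congr rfl fun j _ => Finset.sum_congr rfl fun i _ => by ring
  have hhall := weighted_hall N w hw r h (Finset.univ.filter fun i => 0 < y i) y M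
    (fun i hi => (Finset.mem_filter.1 hi).2)
    (fun i hi => le_antisymm (by simpa using hi) (hy i)) hM0 (fun i j hij => hyM j i hij)
  rw [hLp] at hlt
  rw [hf] at hfr
  linarith
end

section
/- Let x be a feasible solution of the subtour elimination LP for s–t path TSP. Let Q_1 = δ(U_1), …, Q_m = δ(U_m) be narrow cuts with s ∈ U_i and t ∉ U_i for each i, where U_1, …, U_m are pairwise distinct. Let B be the set of edges that lie in Q_i ∩ Q_j for some i ≠ j, and for each i set r_i := 1 − x(Q_i ∖ B). Then there exist real numbers z(e, i) ≥ 0, defined for each e ∈ B and each index i with e ∈ Q_i, such that ∑_{i : e ∈ Q_i} z(e, i) ≤ 1 for every e ∈ B, and ∑_{e ∈ B ∩ Q_i} x(e)·z(e, i) ≥ r_i for every i = 1, …, m. -/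
/-!
Assigning each edge fractionally to the cuts containing it so that every cut receives `x`-weight
at least `1` suffices: in a cut `Q i`, the edges outside `B` contribute at most `x(Q i \ B)`, so
the edges in `B` contribute at least `r_i`.

Such an assignment exists by a fractional version of Hall's theorem (`fractional_hall`), whose
hypothesis is that any `k` of the cuts together have `x`-weight at least `k` (`hall_condition`).
This holds because narrow cuts form a chain `U_1 ⊂ ⋯ ⊂ U_k` (`narrow_nested`), and an edge lies in
the union of the cuts iff it joins two different layers among
`U_1, U_2 \ U_1, …, V \ U_k`. Twice the weight of the union is the sum of the cut values of the
layers, which is at least `1 + 2 (k - 1) + 1 = 2k` by the constraints of the LP.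

`fractional_hall` is derived from the separation theorem for convex sets; the dual inequality
(`weighted_hall`) reduces to Hall's condition by a level-set decomposition.
-/

open Finset

noncomputable section
open scoped Classical

/-- The set `B` of edges lying in at least two of the cuts `δ(U i)`. -/
def badEdges {V : Type*} [Fintype V] {m : ℕ} (U : Fin m → Finset V) : Finset (Sym2 V) :=
  Finset.univ.filter fun e => ∃ i j : Fin m, i ≠ j ∧ e ∈ cutEdges (U i) ∧ e ∈ cutEdges (U j)

/-! ### Cuts -/

lemma sum_eq_sum_ite {E : Type*} [Fintype E] (S : Finset E) (x : E → ℝ) :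
    ∑ e ∈ S, x e = ∑ e, if e ∈ S then x e else 0 := by
  simp

lemma mk_mem_cutEdges {V : Type*} [Fintype V] (U : Finset V) (u v : V) :
    s(u, v) ∈ cutEdges U ↔ ((u ∈ U ∧ v ∉ U) ∨ (v ∈ U ∧ u ∉ U)) := by
  simp only [cutEdges, Finset.mem_filter, Finset.mem_univ, true_and]
  constructor
  · rintro ⟨a, b, h, ha, hb⟩
    rcases Sym2.eq_iff.1 h with ⟨rfl, rfl⟩ | ⟨rfl, rfl⟩
    · exact Or.inl ⟨ha, hb⟩
    · exact Or.inr ⟨ha, hb⟩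
  · rintro (⟨h1, h2⟩ | ⟨h1, h2⟩)
    · exact ⟨u, v, rfl, h1, h2⟩
    · exact ⟨v, u, Sym2.eq_swap, h1, h2⟩

/-- A nonempty set avoiding both `s` and `t` has cut value at least `2`. -/
lemma two_le_cut {V : Type*} [Fintype V] {s t : V} {x : Sym2 V → ℝ} (hx : SubtourLP s t x)
    {L : Finset V} (hL : L.Nonempty) (hs : s ∉ L) (ht : t ∉ L) :
    2 ≤ ∑ e ∈ cutEdges L, x e := by
  have h := hx.2.2 L hL (fun h => hs (h ▸ Finset.mem_univ s))
  have h0 : L ∩ {s, t} = ∅ := by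
    ext a; simp only [Finset.mem_inter, Finset.mem_insert, Finset.mem_singleton]
    grind
  simpa [lpBound, h0] using h

lemma one_le_cut {V : Type*} [Fintype V] {s t : V} {x : Sym2 V → ℝ} (hx : SubtourLP s t x)
    {L : Finset V} (hs : s ∈ L) (ht : t ∉ L) :
    1 ≤ ∑ e ∈ cutEdges L, x e := by
  have h := hx.2.2 L ⟨s, hs⟩ (fun h => ht (h ▸ Finset.mem_univ t))
  have h0 : L ∩ {s, t} = {s} := by
    ext a; simp only [Finset.mem_inter, Finset.mem_insert, Finset.mem_singleton]
    grind
  simpa [lpBound, h0] using h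

/-- Two narrow cuts are nested: otherwise uncrossing yields `δ(A \ B)` and `δ(B \ A)`, each of
value at least `2`, with total value at most `x(δ(A)) + x(δ(B)) < 4`. -/
lemma narrow_nested {V : Type*} [Fintype V] {s t : V} {x : Sym2 V → ℝ} (hx : SubtourLP s t x)
    {A B : Finset V} (hsA : s ∈ A) (hsB : s ∈ B) (htA : t ∉ A) (htB : t ∉ B)
    (hA : ∑ e ∈ cutEdges A, x e < 2) (hB : ∑ e ∈ cutEdges B, x e < 2) : A ⊆ B ∨ B ⊆ A := by
  by_contra! h
  have h1 := two_le_cut hx (L := A \ B) (Finset.sdiff_nonempty.2 h.1) (by simp [hsB]) (by simp [htA])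
  have h2 := two_le_cut hx (L := B \ A) (Finset.sdiff_nonempty.2 h.2) (by simp [hsA]) (by simp [htB])
  have key : ∑ e ∈ cutEdges (A \ B), x e + ∑ e ∈ cutEdges (B \ A), x e
      ≤ ∑ e ∈ cutEdges A, x e + ∑ e ∈ cutEdges B, x e := by
    rw [sum_eq_sum_ite (cutEdges (A \ B)), sum_eq_sum_ite (cutEdges (B \ A)),
      sum_eq_sum_ite (cutEdges A), sum_eq_sum_ite (cutEdges B), ← Finset.sum_add_distrib,
      ← Finset.sum_add_distrib]
    refine Finset.sum_le_sum fun e _ => ?_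
    have h0 := hx.1 e
    induction e with | _ u v => ?_
    simp only [mk_mem_cutEdges, Finset.mem_sdiff]
    grind
  linarith

/-! ### The Hall condition -/

/-- Adding a larger set `T'` on top of a chain with top `T`: the layer `T' \ T` has cut value at
least `2`, and each edge of its cut lies in exactly one of `δ(T)` and `δ(T')`. -/
lemma layer_step {V : Type*} [Fintype V] {s t : V} {x : Sym2 V → ℝ} (hx : SubtourLP s t x)
    {T T' : Finset V} (hsT : s ∈ T) (htT' : t ∉ T') (hT : T ⊂ T') :
    2 + ∑ e ∈ cutEdges T', x e ≤
      ∑ e ∈ cutEdges T, x e + 2 * ∑ e ∈ cutEdges T' \ cutEdges T, x e := by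
  have h1 := two_le_cut hx (L := T' \ T) (Finset.sdiff_nonempty.2 hT.2) (by simp [hsT])
    (by simp [htT'])
  have hsub := hT.1
  have key : ∑ e ∈ cutEdges (T' \ T), x e + ∑ e ∈ cutEdges T', x e ≤
      ∑ e ∈ cutEdges T, x e + 2 * ∑ e ∈ cutEdges T' \ cutEdges T, x e := by
    rw [sum_eq_sum_ite (cutEdges (T' \ T)), sum_eq_sum_ite (cutEdges T'),
      sum_eq_sum_ite (cutEdges T), sum_eq_sum_ite (cutEdges T' \ cutEdges T), Finset.mul_sum,
      ← Finset.sum_add_distrib, ← Finset.sum_add_distrib]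
    refine Finset.sum_le_sum fun e _ => ?_
    have h0 := hx.1 e
    induction e with | _ u v => ?_
    have hu := @hsub u
    have hv := @hsub v
    simp only [mk_mem_cutEdges, Finset.mem_sdiff]
    grind
  linarith

/-- Hall's condition for the fractional assignment of edges to cuts: any `k` of the cuts together
carry `x`-weight at least `k`. The sharper bound `2k - 1 + x(δ(T)) ≤ 2 x(⋃ δ(U i))`, with `T` the
largest of the sets, is proved by adding the sets in increasing order. -/
lemma hall_condition {V : Type*} [Fintype V] {s t : V} {x : Sym2 V → ℝ} (hx : SubtourLP s t x)
    {m : ℕ} {U : Fin m → Finset V} (hUinj : Function.Injective U)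
    (hs : ∀ i, s ∈ U i) (ht : ∀ i, t ∉ U i)
    (hnarrow : ∀ i, ∑ e ∈ cutEdges (U i), x e < 2) (I : Finset (Fin m)) :
    (I.card : ℝ) ≤ ∑ e ∈ I.biUnion (fun i => cutEdges (U i)), x e := by
  have main : I.Nonempty → ∃ T ∈ I, (∀ i ∈ I, U i ⊆ U T) ∧
      2 * (I.card : ℝ) - 1 + ∑ e ∈ cutEdges (U T), x e ≤
        2 * ∑ e ∈ I.biUnion (fun i => cutEdges (U i)), x e := by
    induction I using Finset.induction_on_max_value (fun i => (U i).card) with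
    | empty => simp
    | insert a I haI hmax ih =>
      intro _
      have hsub : ∀ i ∈ I, U i ⊂ U a := by
        intro i hi
        have hne : U i ≠ U a := fun h => haI (hUinj h ▸ hi)
        rcases narrow_nested hx (hs i) (hs a) (ht i) (ht a) (hnarrow i) (hnarrow a) with h | h
        · exact h.ssubset_of_ne hne
        · exact absurd (Finset.eq_of_subset_of_card_le h (hmax i hi)).symm hne
      refine ⟨a, Finset.mem_insert_self _ _, ?_, ?_⟩
      · intro i hi
        rcases Finset.mem_insert.1 hi with rfl | hi
        · exact subset_rfl
        · exact (hsub i hi).1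
      · rcases I.eq_empty_or_nonempty with rfl | hne
        · have := one_le_cut hx (hs a) (ht a)
          simp only [insert_empty_eq, Finset.card_singleton, Finset.singleton_biUnion]
          push_cast
          linarith
        · obtain ⟨T, hTI, hTtop, hT⟩ := ih hne
          have hstep := layer_step hx (hs T) (ht a) (hsub T hTI)
          have hTa := (hsub T hTI).1
          have hdisj : Disjoint (I.biUnion (fun i => cutEdges (U i)))
              (cutEdges (U a) \ cutEdges (U T)) := by
            rw [Finset.disjoint_left]
            intro e he he'
            obtain ⟨i, hi, he⟩ := Finset.mem_biUnion.1 he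
            have hiT := hTtop i hi
            induction e with | _ u v => ?_
            have h1 := @hiT u
            have h2 := @hiT v
            have h3 := @hTa u
            have h4 := @hTa v
            simp only [mk_mem_cutEdges, Finset.mem_sdiff] at he he'
            tauto
          have hle : ∑ e ∈ I.biUnion (fun i => cutEdges (U i)), x e
              + ∑ e ∈ cutEdges (U a) \ cutEdges (U T), x e ≤
              ∑ e ∈ (insert a I).biUnion (fun i => cutEdges (U i)), x e := by
            rw [← Finset.sum_union hdisj]
            refine Finset.sum_le_sum_of_subset_of_nonneg ?_ (fun e _ _ => hx.1 e)
            rw [Finset.biUnion_insert, Finset.union_comm]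
            exact Finset.union_subset_union Finset.sdiff_subset subset_rfl
          rw [Finset.card_insert_of_notMem haI]
          push_cast
          linarith
  rcases I.eq_empty_or_nonempty with rfl | hne
  · simp
  · obtain ⟨T, -, -, h⟩ := main hne
    have := one_le_cut hx (hs T) (ht T)
    linarith

/-! ### Fractional Hall theorem -/

/-- Weighted form of Hall's condition, obtained from the unweighted one by decomposing `w` into
its level sets. -/
lemma weighted_hall_s6 {E ι : Type*} [Fintype E] [DecidableEq E] [Fintype ι] (x : E → ℝ) (Q : ι → Finset E)
    (hall : ∀ I : Finset ι, (I.card : ℝ) ≤ ∑ e ∈ I.biUnion Q, x e)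
    (w : ι → ℝ) (hw : ∀ i, 0 ≤ w i) (M : E → ℝ) (hx : ∀ e, 0 ≤ x e) (hM : ∀ e, 0 ≤ M e)
    (hwM : ∀ i, ∀ e ∈ Q i, w i ≤ M e) : ∑ i, w i ≤ ∑ e, x e * M e := by
  induction hn : (Finset.univ.filter (fun i => w i ≠ 0)).card using Nat.strong_induction_on
    generalizing w M with
  | _ n ih =>
  set I := Finset.univ.filter (fun i => w i ≠ 0) with hI
  rcases I.eq_empty_or_nonempty with h0 | hne
  · have hw0 : ∀ i, w i = 0 := by
      intro i
      by_contra h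
      have : i ∈ I := by simp [hI, h]
      simp [h0] at this
    simp only [hw0, Finset.sum_const_zero]
    exact Finset.sum_nonneg fun e _ => mul_nonneg (hx e) (hM e)
  · obtain ⟨k, hk, hkmin⟩ := Finset.exists_min_image I w hne
    have hmem : ∀ i, i ∈ I ↔ w i ≠ 0 := fun i => by simp [hI]
    -- Subtract the smallest positive value `w k` from `w` on its support `I`, and from `M` on the
    -- elements covered by `I`.
    have hstep := ih _ ?_ (fun i => w i - if i ∈ I then w k else 0) ?_
      (fun e => M e - if e ∈ I.biUnion Q then w k else 0) ?_ ?_ rfl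
    · have h1 := mul_le_mul_of_nonneg_right (hall I) (hw k)
      simp only [mul_sub, Finset.sum_sub_distrib, mul_ite, mul_zero, Finset.sum_ite_mem,
        Finset.univ_inter, Finset.sum_const, nsmul_eq_mul, ← Finset.sum_mul] at hstep
      linarith
    · rw [← hn]
      refine Finset.card_lt_card (Finset.ssubset_iff_of_subset ?_ |>.2 ⟨k, hk, by simp [hk]⟩)
      intro i hi
      by_contra hiI
      have hwi : w i = 0 := by simpa [hmem] using hiI
      simp [hiI, hwi] at hi
    · intro i
      have := hw i
      by_cases hi : i ∈ I
      · simpa [hi] using hkmin i hi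
      · simpa [hi] using this
    · intro e
      by_cases he : e ∈ I.biUnion Q
      · obtain ⟨i, hi, hie⟩ := Finset.mem_biUnion.1 he
        simpa only [he, if_true, sub_nonneg] using (hkmin i hi).trans (hwM i e hie)
      · simpa only [he, if_false, sub_zero] using hM e
    · intro i e hie
      have h1 := hwM i e hie
      by_cases hi : i ∈ I
      · have he : e ∈ I.biUnion Q := Finset.mem_biUnion.2 ⟨i, hi, hie⟩
        simp only [hi, he, if_true]
        linarith
      · have hwi : w i = 0 := by simpa [hmem] using hi
        simp only [hi, if_false, hwi, sub_zero]
        by_cases he : e ∈ I.biUnion Q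
        · obtain ⟨j, hj, hje⟩ := Finset.mem_biUnion.1 he
          simpa only [he, if_true, sub_nonneg] using (hkmin j hj).trans (hwM j e hje)
        · simpa only [he, if_false, sub_zero] using hM e

/-- Fractional Hall theorem. The achievable load vectors form a compact convex set; if it missed
the orthant of vectors with all coordinates at least `1`, a separating functional `w` would be
nonnegative and violate `weighted_hall` when every `e` is assigned to an index maximising `w`. -/
lemma fractional_hall {E ι : Type*} [Fintype E] [DecidableEq E] [Fintype ι] (x : E → ℝ) (hx : ∀ e, 0 ≤ x e)
    (Q : ι → Finset E)
    (hall : ∀ I : Finset ι, (I.card : ℝ) ≤ ∑ e ∈ I.biUnion Q, x e) :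
    ∃ z : E → ι → ℝ, (∀ e i, 0 ≤ z e i) ∧ (∀ e, ∑ i, z e i ≤ 1) ∧
      ∀ i, 1 ≤ ∑ e ∈ Q i, x e * z e i := by
  let Z : Set (E → ι → ℝ) := {z | (∀ e i, 0 ≤ z e i) ∧ ∀ e, ∑ i, z e i ≤ 1}
  let load : (E → ι → ℝ) →ₗ[ℝ] (ι → ℝ) :=
    { toFun := fun z i => ∑ e ∈ Q i, x e * z e i
      map_add' := fun z z' => by
        ext i; simp [mul_add, Finset.sum_add_distrib]
      map_smul' := fun c z => by
        ext i; simp only [Pi.smul_apply, smul_eq_mul, RingHom.id_apply, Finset.mul_sum]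
        exact Finset.sum_congr rfl fun e _ => by ring }
  have hload : ∀ z i, load z i = ∑ e ∈ Q i, x e * z e i := fun _ _ => rfl
  have hZconv : Convex ℝ Z := by
    rintro z ⟨hz1, hz2⟩ z' ⟨hz1', hz2'⟩ a b ha hb hab
    refine ⟨fun e i => ?_, fun e => ?_⟩
    · simp only [Pi.add_apply, Pi.smul_apply, smul_eq_mul]
      exact add_nonneg (mul_nonneg ha (hz1 e i)) (mul_nonneg hb (hz1' e i))
    · simp only [Pi.add_apply, Pi.smul_apply, smul_eq_mul, Finset.sum_add_distrib,
        ← Finset.mul_sum]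
      nlinarith [mul_le_mul_of_nonneg_left (hz2 e) ha, mul_le_mul_of_nonneg_left (hz2' e) hb]
  have hZcomp : IsCompact Z := by
    have hbox : IsCompact (Set.Icc (0 : E → ι → ℝ) 1) := isCompact_Icc
    refine hbox.of_isClosed_subset ?_ ?_
    · have : Z = (⋂ e, ⋂ i, {z | 0 ≤ z e i}) ∩ ⋂ e, {z | ∑ i, z e i ≤ 1} := by
        ext z; simp [Z]
      rw [this]
      refine IsClosed.inter (isClosed_iInter fun e => isClosed_iInter fun i => ?_)
        (isClosed_iInter fun e => ?_)
      · exact isClosed_le (by fun_prop) (by fun_prop)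
      · exact isClosed_le (by fun_prop) (by fun_prop)
    · rintro z ⟨h1, h2⟩
      exact ⟨fun e i => h1 e i, fun e i =>
        (Finset.single_le_sum (fun j _ => h1 e j) (Finset.mem_univ i)).trans (h2 e)⟩
  by_contra hcon
  have hdisj : Disjoint (load '' Z) (Set.Ici (1 : ι → ℝ)) := by
    rw [Set.disjoint_left]
    rintro _ ⟨z, hz, rfl⟩ h
    exact hcon ⟨z, hz.1, hz.2, fun i => h i⟩
  obtain ⟨f, u, v, hfu, huv, hfv⟩ := geometric_hahn_banach_compact_closed
    (hZconv.linear_image load) (hZcomp.image load.continuous_of_finiteDimensional)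
    (convex_Ici (1 : ι → ℝ)) isClosed_Ici hdisj
  set w : ι → ℝ := fun i => f (Pi.single i 1) with hwdef
  have hf : ∀ y, f y = ∑ i, y i * w i := by
    intro y
    conv_lhs => rw [pi_eq_sum_univ' y]
    simp [hwdef, map_sum]
  have hw : ∀ i, 0 ≤ w i := by
    intro i
    by_contra! hneg
    -- Moving far enough from `1` in direction `i` inside the orthant would push `f` below `v`.
    have hc : 0 ≤ (f 1 - v) / (-w i) :=
      div_nonneg (sub_nonneg.2 (hfv 1 (Set.mem_Ici.2 le_rfl)).le) (by linarith)
    have h1 := hfv (1 + ((f 1 - v) / (-w i)) • Pi.single i 1) (by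
      rw [Set.mem_Ici]
      refine le_add_of_nonneg_right (smul_nonneg hc ?_)
      exact Pi.single_nonneg.2 zero_le_one)
    rw [map_add, map_smul, smul_eq_mul] at h1
    have h2 : (f 1 - v) / (-w i) * w i = -(f 1 - v) := by
      rw [div_neg, neg_mul, div_mul_cancel₀ _ hneg.ne]
    change v < f 1 + (f 1 - v) / (-w i) * w i at h1
    linarith
  -- Assign each `e` lying in some `Q i` entirely to an index of largest `w`.
  have hmax : ∀ e, ∃ g : ι → ℝ, ∃ M : ℝ, (∀ i, 0 ≤ g i) ∧ ∑ i, g i ≤ 1 ∧ 0 ≤ M ∧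
      (∀ i, e ∈ Q i → w i ≤ M) ∧ ∑ i, (if e ∈ Q i then g i * w i else 0) = M := by
    intro e
    rcases (Finset.univ.filter (fun i => e ∈ Q i)).eq_empty_or_nonempty with h0 | hne
    · have h0' : ∀ i, e ∉ Q i := fun i hi => by
        have : i ∈ Finset.univ.filter (fun i => e ∈ Q i) := by simp [hi]
        simp [h0] at this
      exact ⟨0, 0, by simp, by simp, le_rfl, fun i hi => absurd hi (h0' i), by simp⟩
    · obtain ⟨k, hk, hkmax⟩ := Finset.exists_max_image _ w hne
      have hk' : e ∈ Q k := by simpa using hk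
      refine ⟨Pi.single k 1, w k, fun i => ?_, by simp, hw k,
        fun i hi => hkmax i (by simp [hi]), ?_⟩
      · exact (Pi.single_nonneg.2 zero_le_one : (0 : ι → ℝ) ≤ Pi.single k 1) i
      · rw [Finset.sum_eq_single k]
        · simp [hk']
        · intro b _ hb; simp [hb]
        · simp
  choose z M hz0 hz1 hM hwM hzM using hmax
  have h1 := hfu _ ⟨z, ⟨hz0, hz1⟩, rfl⟩
  have h2 := hfv 1 (Set.mem_Ici.2 le_rfl)
  have h3 := weighted_hall_s6 x Q hall w hw M hx hM (fun i e he => hwM e i he)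
  have h4 : f (load z) = ∑ e, x e * M e := by
    rw [hf]
    simp only [hload, Finset.sum_mul, ← hzM, Finset.mul_sum]
    rw [Finset.sum_comm]
    refine Finset.sum_congr rfl fun i _ => ?_
    rw [← Finset.univ_inter (Q i), ← Finset.sum_ite_mem]
    refine Finset.sum_congr rfl fun e _ => ?_
    simp only [Finset.univ_inter]
    split_ifs <;> ring
  have h5 : f 1 = ∑ i, w i := by rw [hf]; simp
  linarith

/-- Feasibility of the reconnection LP `(D0),(D1),(D2)` for a family of narrow cuts. -/
theorem reconnection_LP_feasible {V : Type*} [Fintype V] (s t : V) (hst : s ≠ t)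
    (x : Sym2 V → ℝ) (hx : SubtourLP s t x)
    (m : ℕ) (U : Fin m → Finset V) (hUinj : Function.Injective U)
    (hs : ∀ i, s ∈ U i) (ht : ∀ i, t ∉ U i)
    (hnarrow : ∀ i, ∑ e ∈ cutEdges (U i), x e < 2) :
    ∃ z : Sym2 V → Fin m → ℝ,
      (∀ e i, 0 ≤ z e i) ∧
      (∀ e ∈ badEdges U,
        ∑ i ∈ Finset.univ.filter (fun i : Fin m => e ∈ cutEdges (U i)), z e i ≤ 1) ∧
      (∀ i : Fin m,
        1 - ∑ e ∈ cutEdges (U i) \ badEdges U, x e ≤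
          ∑ e ∈ badEdges U ∩ cutEdges (U i), x e * z e i) := by
  obtain ⟨z, hz0, hz1, hz⟩ := fractional_hall x hx.1 (fun i => cutEdges (U i))
    (hall_condition hx hUinj hs ht hnarrow)
  refine ⟨z, hz0, fun e _ => ?_, fun i => ?_⟩
  · exact (Finset.sum_le_sum_of_subset_of_nonneg (Finset.filter_subset _ _)
      (fun i _ _ => hz0 e i)).trans (hz1 e)
  · have h1 : ∑ e ∈ cutEdges (U i) \ badEdges U, x e * z e i ≤
        ∑ e ∈ cutEdges (U i) \ badEdges U, x e := by
      refine Finset.sum_le_sum fun e _ => mul_le_of_le_one_right (hx.1 e) ?_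
      exact (Finset.single_le_sum (fun j _ => hz0 e j) (Finset.mem_univ i)).trans (hz1 e)
    have h2 := Finset.sum_inter_add_sum_sdiff (cutEdges (U i)) (badEdges U)
      (fun e => x e * z e i)
    have h3 := hz i
    rw [Finset.inter_comm]
    linarith
end
end

section
/- Let E be a finite set, let M_1, …, M_k be matroids on E with rank functions r_1, …, r_k, let λ_1, …, λ_k be real numbers with 0 ≤ λ_i ≤ 1, and let w : E → ℝ with w(e) ≥ 0 for every e. For each i let P^i ⊆ ℝ^E be the convex hull of the indicator vectors of the independent sets of M_i. Then there exist x^1 ∈ P^1, …, x^k ∈ P^k with ∑_{i=1}^k λ_i·x^i = w if and only if ∑_{i=1}^k λ_i·r_i(X) ≥ w(X) for every X ⊆ E, where w(X) := ∑_{e ∈ X} w(e). -/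
/-!
Necessity: every independent set `I` satisfies `|I ∩ X| ≤ r(X)`, a linear inequality that passes to
the convex hull and then to the weighted sum.

Sufficiency: the set `∑ i, lam i • P i` is compact and convex, so if it misses `w`, some linear
functional with coefficients `c` is strictly larger at `w` than on the whole set. Running the greedy
algorithm for `c` on `{e | 0 < c e}` simultaneously in all the matroids yields independent sets
`I i` whose traces on the prefixes of a decreasing ordering of `c` have full rank. Abel summation
along this ordering turns the rank inequalities into
`∑ e with 0 < c e, c e * w e ≤ ∑ i, lam i * ∑ e ∈ I i, c e` (`exists_greedy`). The left-hand side is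
at least `c · w` because `w ≥ 0`, and the right-hand side is the value of `c` at a point of
`∑ i, lam i • P i`, a contradiction.
-/

open Finset

noncomputable section
open scoped Classical

/-- The rank of a set `X` in a matroid `M` on a finite ground type: the maximum size of
an independent subset of `X`. -/
def matroidRank {E : Type*} [Fintype E] (M : Matroid E) (X : Finset E) : ℕ :=
  sSup {n : ℕ | ∃ I : Finset E, I ⊆ X ∧ M.Indep ↑I ∧ I.card = n}

/-- The convex hull of the indicator vectors of the independent sets of `M`. -/
def indepPolytope {E : Type*} [Fintype E] (M : Matroid E) : Set (E → ℝ) :=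
  convexHull ℝ {y : E → ℝ | ∃ I : Set E, M.Indep I ∧ y = fun e => if e ∈ I then 1 else 0}

section Helpers

variable {E : Type*} [Fintype E]

theorem card_le_matroidRank (M : Matroid E) {X I : Finset E} (hIX : I ⊆ X)
    (hI : M.Indep (I : Set E)) : I.card ≤ matroidRank M X := by
  apply le_csSup
  · refine ⟨X.card, ?_⟩
    rintro n ⟨J, hJ, -, rfl⟩
    exact card_le_card hJ
  · exact ⟨I, hIX, hI, rfl⟩

/-- Any independent subset of `X` extends to one of size `matroidRank M X`. -/
theorem exists_superset_card_eq_matroidRank (M : Matroid E) {X I : Finset E} (hIX : I ⊆ X)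
    (hI : M.Indep (I : Set E)) :
    ∃ J : Finset E, I ⊆ J ∧ J ⊆ X ∧ M.Indep (J : Set E) ∧ J.card = matroidRank M X := by
  obtain ⟨B, hB, hIB⟩ := hI.subset_isBasis'_of_subset (X := (X : Set E)) (by exact_mod_cast hIX)
  lift B to Finset E using Set.toFinite B
  refine ⟨B, by exact_mod_cast hIB, by exact_mod_cast hB.subset, hB.indep, ?_⟩
  refine le_antisymm (card_le_matroidRank M (by exact_mod_cast hB.subset) hB.indep) ?_
  apply csSup_le'
  rintro n ⟨J, hJX, hJ, rfl⟩
  obtain ⟨B', hB', hJB'⟩ := hJ.subset_isBasis'_of_subset (X := (X : Set E)) (by exact_mod_cast hJX)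
  have h1 := Set.encard_le_encard hJB'
  rw [hB'.encard_eq_encard hB, Set.encard_coe_eq_coe_finsetCard,
    Set.encard_coe_eq_coe_finsetCard] at h1
  exact_mod_cast h1

theorem sum_le_matroidRank (M : Matroid E) {x : E → ℝ} (hx : x ∈ indepPolytope M)
    (X : Finset E) : ∑ e ∈ X, x e ≤ matroidRank M X := by
  let f : (E → ℝ) →ₗ[ℝ] ℝ := ∑ e ∈ X, LinearMap.proj e
  have hf : ∀ y, f y = ∑ e ∈ X, y e := fun y => by simp [f]
  have hsub : indepPolytope M ⊆ {y | f y ≤ matroidRank M X} := by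
    refine convexHull_min ?_ (convex_halfSpace_le f.isLinear _)
    rintro y ⟨I, hI, rfl⟩
    rw [Set.mem_ofPred_eq, hf, Finset.sum_boole]
    exact_mod_cast card_le_matroidRank M (filter_subset _ _)
      (hI.subset (fun e he => (mem_filter.1 (mem_coe.1 he)).2))
  rw [← hf]
  exact hsub hx

theorem isCompact_indepPolytope (M : Matroid E) : IsCompact (indepPolytope M) := by
  unfold indepPolytope
  refine Set.Finite.isCompact_convexHull (𝕜 := ℝ) ?_
  refine (Set.finite_range (fun I : Set E => fun e => if e ∈ I then (1 : ℝ) else 0)).subset ?_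
  rintro y ⟨I, -, rfl⟩
  exact ⟨I, rfl⟩

/-- The greedy algorithm, run in all matroids at once. The shift `t` is what makes the induction on
`S` (in order of decreasing `c`) go through: passing to a new smallest element `a`, one uses the
hypothesis with `t = c a` and the rank inequality for `insert a S` with weight `c a - t`. -/
theorem exists_greedy_s9 {ι : Type*} [Fintype ι] (M : ι → Matroid E) (lam : ι → ℝ)
    (hlam : ∀ i, 0 ≤ lam i) (w : E → ℝ)
    (h : ∀ X : Finset E, ∑ e ∈ X, w e ≤ ∑ i, lam i * (matroidRank (M i) X : ℝ))
    (c : E → ℝ) (S : Finset E) :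
    ∃ I : ι → Finset E, (∀ i, I i ⊆ S ∧ (M i).Indep (I i : Set E)) ∧
      ∀ t, (∀ e ∈ S, t ≤ c e) →
        ∑ e ∈ S, (c e - t) * w e ≤ ∑ i, lam i * ∑ e ∈ I i, (c e - t) := by
  induction S using Finset.induction_on_min_value c with
  | empty => exact ⟨fun _ => ∅, fun i => ⟨subset_rfl, by simp⟩, by simp⟩
  | insert a S ha hmin ih =>
    obtain ⟨I, hI, hle⟩ := ih
    choose J hIJ hJS hJ hcard using fun i =>
      exists_superset_card_eq_matroidRank (M i) ((hI i).1.trans (subset_insert a S)) (hI i).2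
    refine ⟨J, fun i => ⟨hJS i, hJ i⟩, fun t ht => ?_⟩
    have hta : t ≤ c a := ht a (mem_insert_self a S)
    have hmin' : ∀ e ∈ insert a S, c a ≤ c e := by
      intro e he
      rcases mem_insert.1 he with rfl | he
      · exact le_rfl
      · exact hmin e he
    calc ∑ e ∈ insert a S, (c e - t) * w e
        = ∑ e ∈ S, (c e - c a) * w e + (c a - t) * ∑ e ∈ insert a S, w e := by
          have : ∑ e ∈ S, (c e - c a) * w e = ∑ e ∈ insert a S, (c e - c a) * w e := by
            rw [sum_insert ha]; simp
          rw [this, mul_sum, ← sum_add_distrib]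
          exact sum_congr rfl fun e _ => by ring
      _ ≤ ∑ i, lam i * ∑ e ∈ I i, (c e - c a)
            + (c a - t) * ∑ i, lam i * (matroidRank (M i) (insert a S) : ℝ) :=
          add_le_add (hle _ hmin) (mul_le_mul_of_nonneg_left (h _) (sub_nonneg.2 hta))
      _ = ∑ i, lam i * (∑ e ∈ I i, (c e - c a) + (c a - t) * (J i).card) := by
          rw [mul_sum, ← sum_add_distrib]
          exact sum_congr rfl fun i _ => by rw [hcard]; ring
      _ ≤ ∑ i, lam i * ∑ e ∈ J i, (c e - t) := by
          refine sum_le_sum fun i _ => mul_le_mul_of_nonneg_left ?_ (hlam i)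
          have h1 : ∑ e ∈ I i, (c e - c a) ≤ ∑ e ∈ J i, (c e - c a) :=
            sum_le_sum_of_subset_of_nonneg (hIJ i)
              fun e he _ => sub_nonneg.2 (hmin' e (hJS i he))
          have h2 : ∑ e ∈ J i, (c e - t) = ∑ e ∈ J i, (c e - c a) + (c a - t) * (J i).card := by
            rw [mul_comm, ← nsmul_eq_mul, ← sum_const, ← sum_add_distrib]
            exact sum_congr rfl fun e _ => by ring
          linarith

end Helpers

/-- Fractional version of Edmonds' matroid partition theorem. -/
theorem fractional_matroid_partition {E : Type*} [Fintype E]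
    (k : ℕ) (M : Fin k → Matroid E) (hM : ∀ i, (M i).E = Set.univ)
    (lam : Fin k → ℝ) (hlam : ∀ i, 0 ≤ lam i ∧ lam i ≤ 1)
    (w : E → ℝ) (hw : ∀ e, 0 ≤ w e) :
    (∃ xv : Fin k → E → ℝ, (∀ i, xv i ∈ indepPolytope (M i)) ∧
        ∀ e, ∑ i : Fin k, lam i * xv i e = w e) ↔
      ∀ X : Finset E, ∑ e ∈ X, w e ≤ ∑ i : Fin k, lam i * (matroidRank (M i) X : ℝ) := by
  constructor
  · rintro ⟨xv, hxv, hsum⟩ X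
    calc ∑ e ∈ X, w e = ∑ i, lam i * ∑ e ∈ X, xv i e := by
          simp_rw [← hsum, mul_sum]
          exact sum_comm
      _ ≤ _ := sum_le_sum fun i _ =>
          mul_le_mul_of_nonneg_left (sum_le_matroidRank (M i) (hxv i) X) (hlam i).1
  · intro h
    let L : (Fin k → E → ℝ) →ₗ[ℝ] (E → ℝ) := ∑ i, lam i • LinearMap.proj i
    have hL : ∀ x e, L x e = ∑ i, lam i * x i e := fun x e => by simp [L]
    let K : Set (Fin k → E → ℝ) := Set.univ.pi fun i => indepPolytope (M i)
    have hKc : IsCompact (L '' K) :=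
      (isCompact_univ_pi fun i => isCompact_indepPolytope (M i)).image
        L.continuous_of_finiteDimensional
    have hKconv : Convex ℝ (L '' K) :=
      (convex_pi fun i _ => convex_convexHull ℝ _).linear_image L
    by_cases hmem : w ∈ L '' K
    · obtain ⟨x, hx, rfl⟩ := hmem
      exact ⟨x, fun i => hx i (Set.mem_univ i), fun e => (hL x e).symm⟩
    exfalso
    obtain ⟨f, u, hfu, huw⟩ := geometric_hahn_banach_closed_point hKconv hKc.isClosed hmem
    set c : E → ℝ := fun e => f (Pi.single e 1) with hc
    have hf : ∀ y, f y = ∑ e, c e * y e := by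
      intro y
      have := LinearMap.pi_apply_eq_sum_univ (f : (E → ℝ) →ₗ[ℝ] ℝ) y
      simp only [ContinuousLinearMap.coe_coe, smul_eq_mul] at this
      rw [this]
      refine sum_congr rfl fun e _ => ?_
      rw [mul_comm, hc]
      congr 2
      ext j
      simp [Pi.single_apply, eq_comm]
    obtain ⟨I, hI, hle⟩ := exists_greedy_s9 M lam (fun i => (hlam i).1) w h c {e | 0 < c e}
    have hle0 := hle 0 fun e he => (mem_filter.1 he).2.le
    simp only [sub_zero] at hle0
    let x : Fin k → E → ℝ := fun i e => if e ∈ (I i : Set E) then 1 else 0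
    have hx : x ∈ K := fun i _ => subset_convexHull ℝ _ ⟨I i, (hI i).2, by ext e; simp [x]⟩
    have hfx : f (L x) = ∑ i, lam i * ∑ e ∈ I i, c e := by
      rw [hf]
      simp_rw [hL, mul_sum]
      rw [sum_comm]
      refine sum_congr rfl fun i _ => ?_
      rw [← sum_subset (subset_univ (I i))]
      · refine sum_congr rfl fun e he => ?_
        simp [x, he, mul_comm]
      · intro e _ he
        simp [x, he]
    have hfw : f w ≤ ∑ e with 0 < c e, c e * w e := by
      rw [hf, sum_filter]
      refine sum_le_sum fun e _ => ?_
      split_ifs with hpos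
      · exact le_rfl
      · exact mul_nonpos_of_nonpos_of_nonneg (not_lt.1 hpos) (hw e)
    have := hfu _ ⟨x, hx, rfl⟩
    linarith
end
end

section
/- Let G = (V, E) be a finite simple graph, let w : E → ℝ with w(e) ≥ 0 for every e, and let ζ ≥ 0 be a real number. For a partition 𝒫 of V into nonempty classes, let δ(𝒫) be the set of edges of G whose two endpoints lie in different classes of 𝒫. Then there exist finitely many spanning trees B_1, …, B_N of G and nonnegative reals λ_1, …, λ_N with ∑_{j=1}^N λ_j = ζ and ∑_{j : e ∈ B_j} λ_j ≤ w(e) for every e ∈ E, if and only if ∑_{e ∈ δ(𝒫)} w(e) ≥ ζ·(|𝒫| − 1) for every partition 𝒫 of V into nonempty classes. -/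
/-!
Necessity is double counting: contracting the classes of a partition `P` leaves every spanning
tree connected, so each tree has at least `|P| - 1` edges in `δ(P)` (`card_parts_le`).

For sufficiency with `ζ > 0`, a packing of total value `ζ` is the same as a point of the convex
hull of the indicator vectors of spanning trees lying below `w / ζ` on the edges. If there is
none, separating this compact convex set from the closed convex set of vectors below `w / ζ`
gives weights `y ≥ 0` such that every spanning tree has `y`-weight strictly larger than
`(∑ w e * y e) / ζ` (`exists_mem_convexHull_le`).

This is impossible for a spanning tree `B` of minimum `y`-weight (`exists_light_tree`). For a
threshold `t`, let `P` be the partition into components of the edges of `B` of weight below `t`.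
By the exchange argument `reachable_of_lt`, every edge of `δ(P)` has weight at least `t`, and
`B` has at most `|P| - 1` edges of weight at least `t` (`card_le_card_add_card_parts`). The
partition condition therefore gives `ζ * #{e ∈ B | t ≤ y e} ≤ ∑_{t ≤ y e} w e` for all `t`, and
summing over the levels of `y` (`sum_mul_nonneg_of_levels`) gives `ζ * y(B) ≤ ∑ w e * y e`.
-/

open Finset

noncomputable section
open scoped Classical

/-- The edges of `G` whose two endpoints lie in different classes of the partition `P`
of the vertex set. -/
def crossingEdges {V : Type*} [Fintype V] (G : SimpleGraph V)
    (P : Finpartition (Finset.univ : Finset V)) : Finset (Sym2 V) :=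
  Finset.univ.filter fun e => e ∈ G.edgeSet ∧
    ∃ u v : V, e = s(u, v) ∧ ∀ p ∈ P.parts, ¬ (u ∈ p ∧ v ∈ p)

/-! ### Counting edges -/

lemma mem_crossingEdges {V : Type*} [Fintype V] {G : SimpleGraph V}
    {P : Finpartition (Finset.univ : Finset V)} {u v : V} :
    s(u, v) ∈ crossingEdges G P ↔ G.Adj u v ∧ P.part u ≠ P.part v := by
  have key : ∀ a b : V, (∀ p ∈ P.parts, ¬ (a ∈ p ∧ b ∈ p)) ↔ P.part a ≠ P.part b := by
    intro a b
    constructor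
    · intro h hab
      exact h (P.part a) (P.part_mem.2 (mem_univ _))
        ⟨P.mem_part (mem_univ _), hab ▸ P.mem_part (mem_univ _)⟩
    · rintro h p hp ⟨ha, hb⟩
      exact h ((P.part_eq_of_mem hp ha).trans (P.part_eq_of_mem hp hb).symm)
  simp only [crossingEdges, mem_filter, mem_univ, true_and, SimpleGraph.mem_edgeSet, key]
  refine and_congr_right fun _ => ⟨?_, fun h => ⟨u, v, rfl, h⟩⟩
  rintro ⟨a, b, hab, h⟩
  rcases Sym2.eq_iff.1 hab with ⟨rfl, rfl⟩ | ⟨rfl, rfl⟩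
  · exact h
  · exact h.symm

lemma card_le_of_connected_fromEdgeSet {W : Type*} [Fintype W] (A : Finset (Sym2 W))
    (h : (SimpleGraph.fromEdgeSet (A : Set (Sym2 W))).Connected) :
    Fintype.card W ≤ #A + 1 := by
  have h1 := h.card_vert_le_card_edgeSet_add_one
  have h2 : Nat.card (SimpleGraph.fromEdgeSet (A : Set (Sym2 W))).edgeSet ≤ #A := by
    rw [Nat.card_coe_set_eq, ← Set.ncard_coe_finset]
    refine Set.ncard_le_ncard ?_ A.finite_toSet
    rw [SimpleGraph.edgeSet_fromEdgeSet]
    exact Set.sdiff_subset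
  rw [Nat.card_eq_fintype_card] at h1
  omega

/-- A connected graph has at least `|P| - 1` edges across a partition `P`: contracting the
classes leaves a connected graph on `|P|` vertices. -/
lemma card_parts_le {V : Type*} [Fintype V] [Nonempty V] (G : SimpleGraph V)
    (P : Finpartition (Finset.univ : Finset V)) (B : Finset (Sym2 V))
    (hBG : (B : Set (Sym2 V)) ⊆ G.edgeSet)
    (hB : (SimpleGraph.fromEdgeSet (B : Set (Sym2 V))).Connected) :
    #P.parts ≤ #((crossingEdges G P).filter (· ∈ B)) + 1 := by
  let π : V → P.parts := fun v => ⟨P.part v, P.part_mem.2 (mem_univ v)⟩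
  let A : Finset (Sym2 P.parts) := ((crossingEdges G P).filter (· ∈ B)).image (Sym2.map π)
  have hπ : ∀ p : P.parts, ∃ v, π v = p := by
    rintro ⟨p, hp⟩
    obtain ⟨v, hv⟩ := P.nonempty_of_mem_parts hp
    exact ⟨v, Subtype.ext (P.part_eq_of_mem hp hv)⟩
  have hreach : ∀ u v, (SimpleGraph.fromEdgeSet (B : Set (Sym2 V))).Reachable u v →
      (SimpleGraph.fromEdgeSet (A : Set (Sym2 P.parts))).Reachable (π u) (π v) := by
    rintro u v ⟨p⟩
    induction p with
    | nil => exact SimpleGraph.Reachable.refl _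
    | @cons a b c hab _ ih =>
      refine SimpleGraph.Reachable.trans ?_ ih
      by_cases hne : π a = π b
      · rw [hne]
      · refine SimpleGraph.Adj.reachable ?_
        rw [SimpleGraph.fromEdgeSet_adj] at hab ⊢
        refine ⟨?_, hne⟩
        refine mem_coe.2 (mem_image.2 ⟨s(a, b), ?_, rfl⟩)
        refine mem_filter.2 ⟨mem_crossingEdges.2 ⟨hBG hab.1, fun h => hne (Subtype.ext h)⟩, ?_⟩
        exact mem_coe.1 hab.1
  have hconn : (SimpleGraph.fromEdgeSet (A : Set (Sym2 P.parts))).Connected := by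
    have : Nonempty P.parts := ⟨π (Classical.arbitrary V)⟩
    refine ⟨fun p q => ?_⟩
    obtain ⟨u, rfl⟩ := hπ p
    obtain ⟨v, rfl⟩ := hπ q
    exact hreach u v (hB.preconnected u v)
  have h1 := card_le_of_connected_fromEdgeSet A hconn
  have h2 : #A ≤ _ := card_image_le
  rw [Fintype.card_coe] at h1
  omega

/-- If each class of `P` is connected by edges of `A` then `|V| ≤ |A| + |P|`: joining an extra
vertex (here `none`) to one representative of each class makes the graph connected. -/
lemma card_le_card_add_card_parts {V : Type*} [Fintype V]
    (P : Finpartition (Finset.univ : Finset V)) (A : Finset (Sym2 V))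
    (h : ∀ u v, P.part u = P.part v →
      (SimpleGraph.fromEdgeSet (A : Set (Sym2 V))).Reachable u v) :
    Fintype.card V ≤ #A + #P.parts := by
  have hrep : ∀ p : P.parts, ∃ v, P.part v = p := by
    rintro ⟨p, hp⟩
    obtain ⟨v, hv⟩ := P.nonempty_of_mem_parts hp
    exact ⟨v, P.part_eq_of_mem hp hv⟩
  choose r hr using hrep
  let A' : Finset (Sym2 (Option V)) :=
    A.image (Sym2.map some) ∪ (univ : Finset P.parts).image fun p => s(none, some (r p))
  have hlift : ∀ u v, (SimpleGraph.fromEdgeSet (A : Set (Sym2 V))).Reachable u v →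
      (SimpleGraph.fromEdgeSet (A' : Set (Sym2 (Option V)))).Reachable (some u) (some v) := by
    rintro u v ⟨p⟩
    induction p with
    | nil => exact SimpleGraph.Reachable.refl _
    | @cons a b c hab _ ih =>
      refine SimpleGraph.Reachable.trans (SimpleGraph.Adj.reachable ?_) ih
      rw [SimpleGraph.fromEdgeSet_adj] at hab ⊢
      refine ⟨mem_coe.2 (mem_union_left _ (mem_image.2 ⟨s(a, b), mem_coe.1 hab.1, rfl⟩)), ?_⟩
      simpa using hab.2
  have hnone : ∀ x : Option V,
      (SimpleGraph.fromEdgeSet (A' : Set (Sym2 (Option V)))).Reachable none x := by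
    rintro (_ | v)
    · exact SimpleGraph.Reachable.refl _
    · let p : P.parts := ⟨P.part v, P.part_mem.2 (mem_univ v)⟩
      refine SimpleGraph.Reachable.trans (v := some (r p)) (SimpleGraph.Adj.reachable ?_)
        (hlift _ _ (h _ _ (hr p)))
      rw [SimpleGraph.fromEdgeSet_adj]
      exact ⟨mem_coe.2 (mem_union_right _ (mem_image.2 ⟨p, mem_univ _, rfl⟩)), by simp⟩
  have hconn : (SimpleGraph.fromEdgeSet (A' : Set (Sym2 (Option V)))).Connected :=
    ⟨fun x y => (hnone x).symm.trans (hnone y)⟩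
  have h1 := card_le_of_connected_fromEdgeSet A' hconn
  have h2 : #A' ≤ #A + #P.parts := by
    refine (card_union_le _ _).trans (add_le_add card_image_le (card_image_le.trans ?_))
    simp
  rw [Fintype.card_option] at h1
  omega

/-! ### Minimum weight spanning trees -/

/-- `B` is the edge set of a spanning tree of `G`. -/
def IsSpanningTree {V : Type*} (G : SimpleGraph V) (B : Finset (Sym2 V)) : Prop :=
  (B : Set (Sym2 V)) ⊆ G.edgeSet ∧ (SimpleGraph.fromEdgeSet (B : Set (Sym2 V))).IsTree

lemma edgeSet_fromEdgeSet_of_subset {V : Type*} {G : SimpleGraph V} {B : Finset (Sym2 V)}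
    (hB : (B : Set (Sym2 V)) ⊆ G.edgeSet) :
    (SimpleGraph.fromEdgeSet (B : Set (Sym2 V))).edgeSet = B := by
  rw [SimpleGraph.edgeSet_fromEdgeSet, sdiff_eq_left, Set.disjoint_left]
  exact fun e he hd => G.not_isDiag_of_mem_edgeSet (hB he) hd

lemma IsSpanningTree.card {V : Type*} [Fintype V] {G : SimpleGraph V} {B : Finset (Sym2 V)}
    (hB : IsSpanningTree G B) : #B + 1 = Fintype.card V := by
  have h := (SimpleGraph.isTree_iff_connected_and_card.1 hB.2).2
  rwa [edgeSet_fromEdgeSet_of_subset hB.1, Nat.card_coe_set_eq, Set.ncard_coe_finset,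
    Nat.card_eq_fintype_card] at h

/-- The exchange argument: if `B` is a spanning tree of minimum `y`-weight, then the endpoints of
an edge of weight below `t` are connected by edges of `B` of weight below `t`. -/
lemma reachable_of_lt {V : Type*} [Fintype V] {G : SimpleGraph V} {B : Finset (Sym2 V)}
    (hB : IsSpanningTree G B) (y : Sym2 V → ℝ)
    (hmin : ∀ B', IsSpanningTree G B' → ∑ e ∈ B, y e ≤ ∑ e ∈ B', y e) (t : ℝ) {u v : V}
    (huv : G.Adj u v) (hy : y s(u, v) < t) :
    (SimpleGraph.fromEdgeSet ((B.filter (y · < t) : Finset (Sym2 V)) :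
      Set (Sym2 V))).Reachable u v := by
  by_contra hnot
  set T := SimpleGraph.fromEdgeSet (B : Set (Sym2 V)) with hT
  have hTB : T.edgeSet = B := edgeSet_fromEdgeSet_of_subset hB.1
  have heB : s(u, v) ∉ B := by
    intro he
    refine hnot (SimpleGraph.Adj.reachable ?_)
    rw [SimpleGraph.fromEdgeSet_adj]
    exact ⟨mem_coe.2 (mem_filter.2 ⟨he, hy⟩), huv.ne⟩
  obtain ⟨p, hp⟩ := (hB.2.connected.preconnected u v).exists_isPath
  -- Otherwise the tree path itself would lie below `t`.
  obtain ⟨f, hfp, hft⟩ : ∃ f ∈ p.edges, t ≤ y f := by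
    by_contra! hall
    refine hnot ⟨p.transfer _ fun e he => ?_⟩
    have heT : e ∈ T.edgeSet := p.edges_subset_edgeSet he
    rw [SimpleGraph.edgeSet_fromEdgeSet]
    refine ⟨mem_coe.2 (mem_filter.2 ⟨?_, hall e he⟩), T.not_isDiag_of_mem_edgeSet heT⟩
    rw [hTB] at heT
    exact mem_coe.1 heT
  have hfB : f ∈ B := by
    have := p.edges_subset_edgeSet hfp
    rw [hTB] at this
    exact mem_coe.1 this
  have hef : s(u, v) ≠ f := fun h => heB (h ▸ hfB)
  let B₁ : Finset (Sym2 V) := insert s(u, v) B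
  let T' := SimpleGraph.fromEdgeSet (B₁ : Set (Sym2 V))
  have hle : T ≤ T' := SimpleGraph.fromEdgeSet_mono (by
    rw [coe_subset]; exact subset_insert _ _)
  have hadj : T'.Adj v u := by
    rw [SimpleGraph.fromEdgeSet_adj]
    exact ⟨mem_coe.2 (by rw [Sym2.eq_swap]; exact mem_insert_self _ _), huv.ne'⟩
  have hcyc : (SimpleGraph.Walk.cons hadj (p.mapLe hle)).IsCycle := by
    rw [SimpleGraph.Walk.cons_isCycle_iff]
    refine ⟨hp.mapLe hle, ?_⟩
    rw [SimpleGraph.Walk.edges_mapLe_eq_edges, Sym2.eq_swap]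
    intro he
    have := p.edges_subset_edgeSet he
    rw [hTB] at this
    exact heB (mem_coe.1 this)
  have hconn : (T'.deleteEdges {f}).Connected := by
    have hT'c : T'.Connected := hB.2.connected.mono hle
    have hfT : f ∈ T'.edgeSet := SimpleGraph.edgeSet_mono hle (p.edges_subset_edgeSet hfp)
    have hnb : ¬ T'.IsBridge f := by
      rw [SimpleGraph.isBridge_iff_forall_cycle_notMem hfT]
      intro h
      refine h _ hcyc ?_
      rw [SimpleGraph.Walk.edges_cons, SimpleGraph.Walk.edges_mapLe_eq_edges]
      exact List.mem_cons_of_mem _ hfp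
    induction f using Sym2.ind with
    | _ a b => exact hT'c.connected_delete_edge_of_not_isBridge hnb
  have hdel : T'.deleteEdges {f} =
      SimpleGraph.fromEdgeSet ((B₁.erase f : Finset (Sym2 V)) : Set (Sym2 V)) := by
    rw [SimpleGraph.deleteEdges_fromEdgeSet, coe_erase]
  have hfB₁ : f ∈ B₁ := mem_insert_of_mem hfB
  have hsub : ((B₁.erase f : Finset (Sym2 V)) : Set (Sym2 V)) ⊆ G.edgeSet := by
    intro e he
    rcases mem_insert.1 (mem_of_mem_erase (mem_coe.1 he)) with rfl | he
    · exact huv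
    · exact hB.1 he
  have htree : IsSpanningTree G (B₁.erase f) := by
    refine ⟨hsub, SimpleGraph.isTree_iff_connected_and_card.2 ⟨hdel ▸ hconn, ?_⟩⟩
    rw [edgeSet_fromEdgeSet_of_subset hsub, Nat.card_coe_set_eq, Set.ncard_coe_finset,
      card_erase_of_mem hfB₁, card_insert_of_notMem heB, Nat.card_eq_fintype_card, ← hB.card]
    rfl
  have h1 := hmin _ htree
  have h2 := add_sum_erase B₁ y hfB₁
  rw [sum_insert heB] at h2
  linarith

/-- A discrete layer cake inequality. -/
lemma sum_mul_nonneg_of_levels {ι : Type*} (S : Finset ι) :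
    ∀ (c y : ι → ℝ), (∀ e ∈ S, 0 ≤ y e) →
      (∀ t, 0 ≤ ∑ e ∈ S.filter (fun e => t ≤ y e), c e) → 0 ≤ ∑ e ∈ S, c e * y e := by
  induction S using Finset.strongInduction with
  | H S ih =>
    intro c y hy hc
    rcases S.eq_empty_or_nonempty with rfl | hS
    · simp
    obtain ⟨m, hmS, hm⟩ := S.exists_min_image y hS
    have hS' : S.filter (fun e => y m < y e) ⊂ S :=
      filter_ssubset.2 ⟨m, hmS, lt_irrefl _⟩
    have h1 : 0 ≤ ∑ e ∈ S, c e := by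
      have := hc (y m)
      rwa [filter_true_of_mem hm] at this
    have h2 := ih _ hS' c (fun e => y e - y m)
      (fun e he => sub_nonneg.2 (mem_filter.1 he).2.le) (fun t => by
        rcases le_or_gt t 0 with ht | ht
        · -- The elements attaining the minimum are removed here, so compare with the next level.
          rw [filter_true_of_mem (fun e he => ht.trans (sub_nonneg.2 (mem_filter.1 he).2.le))]
          rcases (S.filter (fun e => y m < y e)).eq_empty_or_nonempty with h0 | h0
          · rw [h0, sum_empty]
          · obtain ⟨n, hnS, hn⟩ := exists_min_image _ y h0
            convert hc (y n) using 2
            ext e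
            simp only [mem_filter]
            constructor
            · intro he
              exact ⟨he.1, hn e (mem_filter.2 he)⟩
            · intro he
              exact ⟨he.1, (mem_filter.1 hnS).2.trans_le he.2⟩
        · convert hc (t + y m) using 2
          ext e
          simp only [mem_filter]
          constructor
          · rintro ⟨⟨h, _⟩, h'⟩
            exact ⟨h, by linarith⟩
          · rintro ⟨h, h'⟩
            exact ⟨⟨h, by linarith⟩, by linarith⟩)
    have h3 : ∑ e ∈ S.filter (fun e => y m < y e), c e * (y e - y m)
        = ∑ e ∈ S, c e * (y e - y m) := by
      refine sum_subset (filter_subset _ _) fun e he hne => ?_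
      have : y e = y m := le_antisymm
        (not_lt.1 fun h => hne (mem_filter.2 ⟨he, h⟩)) (hm e he)
      rw [this, sub_self, mul_zero]
    have h4 : ∑ e ∈ S, c e * y e = ∑ e ∈ S, c e * (y e - y m) + (∑ e ∈ S, c e) * y m := by
      rw [sum_mul, ← sum_add_distrib]
      exact sum_congr rfl fun e _ => by ring
    rw [h4, ← h3]
    exact add_nonneg h2 (mul_nonneg h1 (hy m hmS))

lemma part_ofSetoid_reachable {V : Type*} [Fintype V] (H : SimpleGraph V) (u v : V) :
    (Finpartition.ofSetoid H.reachableSetoid).part u =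
      (Finpartition.ofSetoid H.reachableSetoid).part v ↔ H.Reachable u v := by
  rw [← Finpartition.mem_part_iff_part_eq_part _ (mem_univ _) (mem_univ _),
    Finpartition.mem_part_ofSetoid_iff_rel]
  exact ⟨fun h => SimpleGraph.Reachable.symm h, fun h => SimpleGraph.Reachable.symm h⟩

/-- The dual inequality: under the partition condition, some spanning tree has `y`-weight at most
`(∑ w e * y e) / ζ`, for every nonnegative `y`. A tree of minimum `y`-weight has this property. -/
lemma exists_light_tree {V : Type*} [Fintype V] [Nonempty V] (G : SimpleGraph V)
    (w : Sym2 V → ℝ) (hw : ∀ e ∈ G.edgeSet, 0 ≤ w e) (ζ : ℝ) (hζ : 0 < ζ)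
    (hP : ∀ P : Finpartition (Finset.univ : Finset V),
        ζ * ((P.parts.card : ℝ) - 1) ≤ ∑ e ∈ crossingEdges G P, w e)
    (y : Sym2 V → ℝ) (hy : ∀ e, 0 ≤ y e) :
    ∃ B, IsSpanningTree G B ∧ ζ * ∑ e ∈ B, y e ≤ ∑ e ∈ G.edgeFinset, w e * y e := by
  -- The partition into connected components has no crossing edge, hence a single class.
  have hG : G.Connected := by
    refine ⟨fun u v => ?_⟩
    have h := hP (Finpartition.ofSetoid G.reachableSetoid)
    have hempty : crossingEdges G (Finpartition.ofSetoid G.reachableSetoid) = ∅ := by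
      refine eq_empty_of_forall_notMem fun e => ?_
      induction e using Sym2.ind with
      | _ a b =>
        rw [mem_crossingEdges]
        rintro ⟨hab, hne⟩
        exact hne ((part_ofSetoid_reachable G a b).2 hab.reachable)
    rw [hempty, sum_empty] at h
    have hcard : #(Finpartition.ofSetoid G.reachableSetoid).parts ≤ 1 := by
      by_contra! hlt
      have : (1 : ℝ) < #(Finpartition.ofSetoid G.reachableSetoid).parts := by exact_mod_cast hlt
      nlinarith
    exact (part_ofSetoid_reachable G u v).1 (card_le_one.1 hcard _
      ((Finpartition.part_mem _).2 (mem_univ _)) _ ((Finpartition.part_mem _).2 (mem_univ _)))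
  have hne : ((univ : Finset (Finset (Sym2 V))).filter (IsSpanningTree G)).Nonempty := by
    obtain ⟨T, hTG, hT⟩ := hG.exists_isTree_le
    refine ⟨T.edgeFinset, mem_filter.2 ⟨mem_univ _, ?_, ?_⟩⟩
    · rw [SimpleGraph.coe_edgeFinset]
      exact SimpleGraph.edgeSet_mono hTG
    · rwa [SimpleGraph.coe_edgeFinset, SimpleGraph.fromEdgeSet_edgeSet]
  obtain ⟨B, hBmem, hmin⟩ := exists_min_image _ (fun B => ∑ e ∈ B, y e) hne
  have hB : IsSpanningTree G B := (mem_filter.1 hBmem).2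
  have hBE : B ⊆ G.edgeFinset := fun e he => by
    rw [SimpleGraph.mem_edgeFinset]; exact hB.1 he
  refine ⟨B, hB, ?_⟩
  have hlevel : ∀ t, 0 ≤ ∑ e ∈ G.edgeFinset.filter (fun e => t ≤ y e),
      (w e - if e ∈ B then ζ else 0) := by
    intro t
    set H := SimpleGraph.fromEdgeSet ((B.filter (y · < t) : Finset (Sym2 V)) : Set (Sym2 V))
    let P := Finpartition.ofSetoid H.reachableSetoid
    have h1 : Fintype.card V ≤ #(B.filter (y · < t)) + #P.parts :=
      card_le_card_add_card_parts P _ fun u v h => (part_ofSetoid_reachable H u v).1 h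
    have h2 : crossingEdges G P ⊆ G.edgeFinset.filter (fun e => t ≤ y e) := by
      intro e
      induction e using Sym2.ind with
      | _ a b =>
        rw [mem_crossingEdges]
        rintro ⟨hab, hne⟩
        refine mem_filter.2 ⟨SimpleGraph.mem_edgeFinset.2 hab, not_lt.1 fun hlt => hne ?_⟩
        exact (part_ofSetoid_reachable H a b).2 (reachable_of_lt hB y
          (fun B' hB' => hmin B' (mem_filter.2 ⟨mem_univ _, hB'⟩)) t hab hlt)
    have h3 : ∑ e ∈ crossingEdges G P, w e ≤
        ∑ e ∈ G.edgeFinset.filter (fun e => t ≤ y e), w e :=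
      sum_le_sum_of_subset_of_nonneg h2 fun e he _ =>
        hw e (SimpleGraph.mem_edgeFinset.1 (mem_filter.1 he).1)
    have h4 : (G.edgeFinset.filter (fun e => t ≤ y e)).filter (· ∈ B) =
        B.filter (fun e => ¬ y e < t) := by
      ext e
      simp only [mem_filter, not_lt]
      exact ⟨fun h => ⟨h.2, h.1.2⟩, fun h => ⟨⟨hBE h.1, h.2⟩, h.1⟩⟩
    have h5 : #(B.filter (y · < t)) + #(B.filter (fun e => ¬ y e < t)) = #B :=
      card_filter_add_card_filter_not _
    have h6 := hB.card
    have h7 : #(B.filter (fun e => ¬ y e < t)) + 1 ≤ #P.parts := by omega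
    have h8 : (#(B.filter (fun e => ¬ y e < t)) : ℝ) + 1 ≤ #P.parts := by exact_mod_cast h7
    rw [sum_sub_distrib, ← sum_filter, h4, sum_const, nsmul_eq_mul]
    have h9 := hP P
    nlinarith
  have h := sum_mul_nonneg_of_levels G.edgeFinset _ y (fun e _ => hy e) hlevel
  simp only [sub_mul, sum_sub_distrib, ite_mul, zero_mul] at h
  rw [← sum_filter, filter_mem_eq_inter, inter_eq_right.2 hBE, ← mul_sum] at h
  linarith

/-! ### Linear programming duality -/

/-- If no convex combination of indicator vectors of spanning trees lies below `w / ζ`, a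
separating hyperplane provides a weight `y ≥ 0` contradicting `exists_light_tree`. -/
lemma exists_mem_convexHull_le {V : Type*} [Fintype V] [Nonempty V] (G : SimpleGraph V)
    (w : Sym2 V → ℝ) (hw : ∀ e ∈ G.edgeSet, 0 ≤ w e) (ζ : ℝ) (hζ : 0 < ζ)
    (hP : ∀ P : Finpartition (Finset.univ : Finset V),
        ζ * ((P.parts.card : ℝ) - 1) ≤ ∑ e ∈ crossingEdges G P, w e) :
    ∃ x ∈ convexHull ℝ ((fun (B : Finset (Sym2 V)) (e : Sym2 V) => if e ∈ B then (1 : ℝ) else 0) ''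
        {B | IsSpanningTree G B}), ∀ e ∈ G.edgeSet, x e ≤ w e / ζ := by
  by_contra! hcon
  set χ : Finset (Sym2 V) → Sym2 V → ℝ := fun B e => if e ∈ B then (1 : ℝ) else 0
  set b : Sym2 V → ℝ := fun e => if e ∈ G.edgeFinset then w e / ζ else 0 with hb
  have hdisj : Disjoint (convexHull ℝ (χ '' {B | IsSpanningTree G B})) (Set.Iic b) := by
    rw [Set.disjoint_left]
    intro x hx hxb
    obtain ⟨e, he, hlt⟩ := hcon x hx
    have := hxb e
    simp only [hb, if_pos (SimpleGraph.mem_edgeFinset.2 he)] at this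
    exact absurd this (not_le.2 hlt)
  obtain ⟨f, s, t, hfs, hst, hft⟩ := geometric_hahn_banach_compact_closed
    (convex_convexHull ℝ _) ((Set.toFinite (χ '' {B | IsSpanningTree G B})).isCompact_convexHull ℝ)
    (convex_Iic b) isClosed_Iic hdisj
  let y : Sym2 V → ℝ := fun e => - f (Pi.single e 1)
  have hf : ∀ x : Sym2 V → ℝ, f x = - ∑ e, x e * y e := by
    intro x
    conv_lhs => rw [← Finset.univ_sum_single x]
    rw [map_sum, ← sum_neg_distrib]
    refine sum_congr rfl fun e _ => ?_
    have : Pi.single e (x e) = x e • (Pi.single e 1 : Sym2 V → ℝ) := by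
      rw [← Pi.single_smul, smul_eq_mul, mul_one]
    rw [this, map_smul, smul_eq_mul]
    ring
  have hy : ∀ e, 0 ≤ y e := by
    intro e
    by_contra! hneg
    -- Moving from `b` far enough in direction `-e` violates the lower bound `t`.
    obtain ⟨k, hk⟩ := exists_nat_gt ((f b - t) / (- y e))
    rw [div_lt_iff₀ (by linarith)] at hk
    have hmem : b - (k : ℝ) • (Pi.single e 1 : Sym2 V → ℝ) ∈ Set.Iic b := by
      have hs : (0 : Sym2 V → ℝ) ≤ Pi.single e 1 := Pi.single_nonneg.2 zero_le_one
      exact Set.mem_Iic.2 (sub_le_self b (smul_nonneg (Nat.cast_nonneg k) hs))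
    have h := hft _ hmem
    rw [map_sub, map_smul, smul_eq_mul] at h
    have : f (Pi.single e 1) = - y e := (neg_neg _).symm
    rw [this] at h
    linarith
  obtain ⟨B, hB, hle⟩ := exists_light_tree G w hw ζ hζ hP y hy
  have h1 := hfs _ (subset_convexHull ℝ _ ⟨B, hB, rfl⟩)
  have h2 := hft b (le_refl b)
  rw [hf] at h1 h2
  have h3 : ∑ e, χ B e * y e = ∑ e ∈ B, y e := by
    simp only [χ, ite_mul, one_mul, zero_mul]
    rw [← sum_filter, filter_mem_eq_inter, univ_inter]
  have h4 : ζ * ∑ e, b e * y e = ∑ e ∈ G.edgeFinset, w e * y e := by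
    simp only [hb, ite_mul, zero_mul]
    rw [← sum_filter, filter_mem_eq_inter, univ_inter, mul_sum]
    exact sum_congr rfl fun e _ => by field_simp
  rw [h3] at h1
  rw [← h4] at hle
  have h5 := le_of_mul_le_mul_left hle hζ
  linarith

/-- Fractional (capacitated) version of the Tutte–Nash-Williams spanning tree packing
theorem. -/
theorem fractional_tree_packing {V : Type*} [Fintype V] [Nonempty V]
    (G : SimpleGraph V) (w : Sym2 V → ℝ) (hw : ∀ e ∈ G.edgeSet, 0 ≤ w e)
    (ζ : ℝ) (hζ : 0 ≤ ζ) :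
    (∃ (N : ℕ) (B : Fin N → Finset (Sym2 V)) (lam : Fin N → ℝ),
        (∀ j, (B j : Set (Sym2 V)) ⊆ G.edgeSet ∧
          (SimpleGraph.fromEdgeSet (B j : Set (Sym2 V))).IsTree) ∧
        (∀ j, 0 ≤ lam j) ∧ (∑ j : Fin N, lam j = ζ) ∧
        (∀ e ∈ G.edgeSet,
          ∑ j ∈ Finset.univ.filter (fun j : Fin N => e ∈ B j), lam j ≤ w e)) ↔
      ∀ P : Finpartition (Finset.univ : Finset V),
        ζ * ((P.parts.card : ℝ) - 1) ≤ ∑ e ∈ crossingEdges G P, w e := by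
  constructor
  · rintro ⟨N, B, lam, hB, hlam, hsum, hcap⟩ P
    calc ζ * ((#P.parts : ℝ) - 1) = ∑ j, lam j * ((#P.parts : ℝ) - 1) := by
          rw [← hsum, sum_mul]
      _ ≤ ∑ j, lam j * (#((crossingEdges G P).filter (· ∈ B j)) : ℝ) := by
          refine sum_le_sum fun j _ => mul_le_mul_of_nonneg_left ?_ (hlam j)
          have h : (#P.parts : ℝ) ≤ #((crossingEdges G P).filter (· ∈ B j)) + 1 := by
            exact_mod_cast card_parts_le G P (B j) (hB j).1 (hB j).2.connected
          linarith
      _ = ∑ e ∈ crossingEdges G P, ∑ j ∈ univ.filter (fun j : Fin N => e ∈ B j), lam j := by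
          simp only [sum_filter]
          rw [sum_comm]
          refine sum_congr rfl fun j _ => ?_
          rw [← sum_filter, sum_const, nsmul_eq_mul, mul_comm]
      _ ≤ ∑ e ∈ crossingEdges G P, w e :=
          sum_le_sum fun e he => hcap e (mem_filter.1 he).2.1
  · intro hP
    rcases hζ.eq_or_lt with rfl | hpos
    · exact ⟨0, Fin.elim0, Fin.elim0, fun j => j.elim0, fun j => j.elim0, by simp,
        fun e he => by simpa using hw e he⟩
    obtain ⟨x, hx, hxw⟩ := exists_mem_convexHull_le G w hw ζ hpos hP
    obtain ⟨ι, _, μ, z, hμ, hμ1, hz, hzx⟩ := mem_convexHull_iff_exists_fintype.1 hx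
    choose B hB hBz using hz
    let φ := (Fintype.equivFin ι).symm
    refine ⟨Fintype.card ι, fun j => B (φ j), fun j => ζ * μ (φ j), fun j => hB (φ j),
      fun j => mul_nonneg hζ (hμ _), ?_, fun e he => ?_⟩
    · rw [← mul_sum, φ.sum_comp μ, hμ1, mul_one]
    · have h1 : ∑ j ∈ univ.filter (fun j => e ∈ B (φ j)), ζ * μ (φ j) = ζ * x e := by
        rw [sum_filter, φ.sum_comp (fun i => if e ∈ B i then ζ * μ i else 0), ← hzx,
          Finset.sum_apply, mul_sum]
        refine sum_congr rfl fun i _ => ?_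
        rw [← hBz i]
        simp
      rw [h1]
      have := hxw e he
      rwa [le_div_iff₀ hpos, mul_comm] at this
end
end

section
/- Let G = (V, E) be a connected finite graph and let s ≠ t be two vertices of V such that |δ(U)| ≥ 3 for every U with ∅ ⊊ U ⊊ V and |U ∩ {s, t}| ≠ 1. Then the all-ones vector on E (the vector y with y(e) = 1 for every e ∈ E) is a convex combination of {s,t}-tours. -/
/-!
It suffices to write twice the all-ones vector as a sum `m + m'` of two `{s,t}`-tours: both get
weight `1/2`. In the doubled graph `2G` all degrees are even, so once `m ≤ 2` has odd degrees
exactly at `s` and `t`, the complement `m' = 2 - m` has too, and the task is to find such an `m`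
with `m` and `m'` both connected.

If `2G` contained three edge-disjoint spanning trees, one tree plus a suitable join inside a second
one would be `m`, and the third would connect `m'`. By the theorem of Tutte and Nash-Williams
(`tree_packing`) such trees exist when `G` is 3-edge-connected; the obstruction is the narrow sets,
those `U` containing `s` with at most two edges in the cut. A maximal narrow proper subset `U'` of
a narrow `U` splits off a layer `W = U \ U'`, and every edge leaving `U'` ends in `W`. A pair
`(m, m')` on `U'` is extended to `U` by giving one copy of one edge between `U'` and `W` to `m`,
all remaining copies to `m'`, and packing three trees in `2G[W]`. The partition condition for this
packing can fail by one edge, but `m'` already connects the ends in `W` of the two edges leaving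
`U'` through `U'`, so one additional edge between those ends may be granted to it; with this edge
the condition holds (`exists_narrow_piece`, `exists_piece`). All of `V` is narrow, which gives the
result.

Tree packing is deduced from Rado's theorem with defect (`rado_defect`), with the graphic rank
realised as the dimension of a span of edge boundaries over `ZMod 2`; in these terms a set of edges
connects the vertices precisely when it contains a join for every even vertex set.
-/

open Finset

noncomputable section
open scoped Classical

/-- The degree of `v` in the multigraph with edge multiplicities `m`. -/
def edgeDegree {V : Type*} [Fintype V] (m : Sym2 V → ℕ) (v : V) : ℕ :=
  ∑ e ∈ Finset.univ.filter (fun e : Sym2 V => v ∈ e), m e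

/-- `m` is an `{s,t}`-tour: a multiplicity function on edges whose multigraph is a
connected spanning multigraph in which exactly `s` and `t` have odd degree. -/
def IsSTTour {V : Type*} [Fintype V] (s t : V) (m : Sym2 V → ℕ) : Prop :=
  (∀ e : Sym2 V, e.IsDiag → m e = 0) ∧
  (SimpleGraph.fromEdgeSet {e : Sym2 V | m e ≠ 0}).Connected ∧
  (∀ v : V, Odd (edgeDegree m v) ↔ v = s ∨ v = t)

/-- The edges of the graph `G` with exactly one endpoint in `U`. -/
def graphCut {V : Type*} [Fintype V] (G : SimpleGraph V) (U : Finset V) : Finset (Sym2 V) :=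
  Finset.univ.filter fun e =>
    e ∈ G.edgeSet ∧ ∃ u v : V, e = s(u, v) ∧ u ∈ U ∧ v ∉ U

universe u

/-! ### Rado's theorem with defect -/

/-- Rado's theorem on independent transversals, with defect `q - p`, for a monotone submodular
function `f`: the sets `A i` can be shrunk to at most one element each while keeping the
Hall-type inequality. If deleting `x` and deleting `y` from the same `A i` both broke the
inequality, submodularity would contradict it for a union and an intersection of violating sets.
The number `n` only drives the induction. -/
lemma rado_defect {ι α : Type*} [Fintype ι] [DecidableEq ι] [DecidableEq α]
    (f : Finset α → ℕ) (hmono : Monotone f)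
    (hsub : ∀ S T : Finset α, f (S ∪ T) + f (S ∩ T) ≤ f S + f T) (p q : ℕ) :
    ∀ (n : ℕ) (A : ι → Finset α), ∑ i, (A i).card = n →
      (∀ K : Finset ι, K.card + p ≤ f (K.biUnion A) + q) →
      ∃ B : ι → Finset α, (∀ i, B i ⊆ A i) ∧ (∀ i, (B i).card ≤ 1) ∧
        ∀ K : Finset ι, K.card + p ≤ f (K.biUnion B) + q := by
  intro n
  induction n using Nat.strong_induction_on with
  | _ n ih =>
  intro A hA h
  by_cases hone : ∀ i, (A i).card ≤ 1
  · exact ⟨A, fun _ => Finset.Subset.refl _, hone, h⟩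
  push Not at hone
  obtain ⟨i, hi⟩ := hone
  obtain ⟨x, hx, y, hy, hxy⟩ := Finset.one_lt_card.mp hi
  -- If deleting `z` from `A i` breaks the condition, it is broken by a set containing `i`.
  have key : ∀ z ∈ A i,
      (∃ B : ι → Finset α, (∀ i, B i ⊆ A i) ∧ (∀ i, (B i).card ≤ 1) ∧
        ∀ K : Finset ι, K.card + p ≤ f (K.biUnion B) + q) ∨
      ∃ K : Finset ι, i ∉ K ∧ f ((A i).erase z ∪ K.biUnion A) + q < K.card + 1 + p := by
    intro z hz
    by_cases hz' : ∀ K : Finset ι,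
        K.card + p ≤ f (K.biUnion (Function.update A i ((A i).erase z))) + q
    · left
      have hle : ∀ j, Function.update A i ((A i).erase z) j ⊆ A j := by
        intro j
        by_cases hj : j = i
        · subst hj; simpa using Finset.erase_subset _ _
        · simp [hj]
      obtain ⟨B, hB, hB1, hB2⟩ := ih _ (by
        rw [← hA]
        apply Finset.sum_lt_sum (fun j _ => Finset.card_le_card (hle j))
        exact ⟨i, Finset.mem_univ _, by simpa using Finset.card_erase_lt_of_mem hz⟩) _ rfl hz'
      exact ⟨B, fun j => (hB j).trans (hle j), hB1, hB2⟩
    · right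
      push Not at hz'
      obtain ⟨K, hK⟩ := hz'
      have hcongr : ∀ L : Finset ι, i ∉ L →
          L.biUnion (Function.update A i ((A i).erase z)) = L.biUnion A := by
        intro L hL
        apply Finset.biUnion_congr rfl
        intro j hj
        rw [Function.update_of_ne]
        rintro rfl
        exact hL hj
      have hiK : i ∈ K := by
        by_contra hiK
        rw [hcongr K hiK] at hK
        exact absurd (h K) (by omega)
      refine ⟨K.erase i, Finset.notMem_erase _ _, ?_⟩
      rw [← Finset.insert_erase hiK, Finset.biUnion_insert,
        hcongr _ (Finset.notMem_erase _ _), Function.update_self,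
        Finset.card_insert_of_notMem (Finset.notMem_erase _ _)] at hK
      exact hK
  rcases key x hx with hB | ⟨K, hiK, hK⟩
  · exact hB
  rcases key y hy with hB | ⟨L, hiL, hL⟩
  · exact hB
  exfalso
  have h1 := hsub ((A i).erase x ∪ K.biUnion A) ((A i).erase y ∪ L.biUnion A)
  have h2 : f ((insert i (K ∪ L)).biUnion A) ≤
      f (((A i).erase x ∪ K.biUnion A) ∪ ((A i).erase y ∪ L.biUnion A)) := by
    apply hmono
    intro z hz
    simp only [Finset.mem_biUnion, Finset.mem_insert, Finset.mem_union, Finset.mem_erase] at hz ⊢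
    obtain ⟨j, (rfl | hj | hj), hzj⟩ := hz
    · by_cases hzx : z = x
      · right; left; exact ⟨by rw [hzx]; exact hxy, hzj⟩
      · left; left; exact ⟨hzx, hzj⟩
    · left; right; exact ⟨j, hj, hzj⟩
    · right; right; exact ⟨j, hj, hzj⟩
  have h3 : f ((K ∩ L).biUnion A) ≤
      f (((A i).erase x ∪ K.biUnion A) ∩ ((A i).erase y ∪ L.biUnion A)) := by
    apply hmono
    intro z hz
    simp only [Finset.mem_biUnion, Finset.mem_inter, Finset.mem_union] at hz ⊢
    obtain ⟨j, ⟨hj1, hj2⟩, hzj⟩ := hz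
    exact ⟨Or.inr ⟨j, hj1, hzj⟩, Or.inr ⟨j, hj2, hzj⟩⟩
  have h4 := h (insert i (K ∪ L))
  have h5 := h (K ∩ L)
  rw [Finset.card_insert_of_notMem (by simp [hiK, hiL])] at h4
  have h6 := Finset.card_union_add_card_inter K L
  omega

/-! ### Packing three spanning connected edge sets -/

/-- The boundary over `ZMod 2` of the edge `i` with ends `a i` and `b i` (zero for a loop). -/
def edgeVec {X ι : Type*} (a b : ι → X) (i : ι) : X → ZMod 2 :=
  Pi.single (a i) 1 + Pi.single (b i) 1

/-- The span of the boundaries of the edges in `S`; its dimension is the rank of `S` in the graphic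
matroid. -/
def edgeSpan {X ι : Type*} (a b : ι → X) (S : Set ι) : Submodule (ZMod 2) (X → ZMod 2) :=
  Submodule.span (ZMod 2) (edgeVec a b '' S)

/-- The even-size vertex sets, as the space of `ZMod 2`-valued functions with sum zero. The edges of
`S` connect `X` precisely when their boundaries span this space. -/
def sumZero (X : Type*) [Fintype X] : Submodule (ZMod 2) (X → ZMod 2) :=
  LinearMap.ker (∑ x : X, LinearMap.proj (R := ZMod 2) (φ := fun _ : X => ZMod 2) x)

lemma mem_sumZero {X : Type*} [Fintype X] (τ : X → ZMod 2) :
    τ ∈ sumZero X ↔ ∑ x, τ x = 0 := by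
  simp [sumZero, LinearMap.mem_ker]

lemma edgeVec_mem_sumZero {X ι : Type*} [Fintype X] (a b : ι → X) (i : ι) :
    edgeVec a b i ∈ sumZero X := by
  rw [mem_sumZero]
  simp [edgeVec, Finset.sum_add_distrib, CharTwo.add_self_eq_zero]

lemma edgeSpan_le_sumZero {X ι : Type*} [Fintype X] (a b : ι → X) (S : Set ι) :
    edgeSpan a b S ≤ sumZero X := by
  rw [edgeSpan, Submodule.span_le]
  rintro _ ⟨i, -, rfl⟩
  exact edgeVec_mem_sumZero a b i

lemma finrank_sumZero (X : Type*) [Fintype X] [Nonempty X] :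
    Module.finrank (ZMod 2) (sumZero X) + 1 = Fintype.card X := by
  have h := LinearMap.finrank_range_add_finrank_ker
    (∑ x : X, LinearMap.proj (R := ZMod 2) (φ := fun _ : X => ZMod 2) x)
  have hs : Function.Surjective
      (∑ x : X, LinearMap.proj (R := ZMod 2) (φ := fun _ : X => ZMod 2) x :
        (X → ZMod 2) →ₗ[ZMod 2] ZMod 2) := by
    intro c
    obtain ⟨x⟩ := ‹Nonempty X›
    exact ⟨Pi.single x c, by simp⟩
  rw [LinearMap.range_eq_top.mpr hs, finrank_top, Module.finrank_self,
    Module.finrank_fintype_fun_eq_card] at h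
  rw [sumZero]
  omega

/-- The rank of `S` is at least the number of vertices minus the number of classes of some partition
`p` that no edge of `S` crosses. Here `p` sends a vertex to its class modulo `edgeSpan a b S`; the
images span the quotient, so there are at least as many classes as its dimension. -/
lemma finrank_edgeSpan_lower {X ι : Type u} [Fintype X] (a b : ι → X) (S : Set ι) :
    ∃ (κ : Type u) (p : X → κ), (∀ i ∈ S, p (a i) = p (b i)) ∧
      Fintype.card X ≤ Module.finrank (ZMod 2) (edgeSpan a b S) + (Finset.univ.image p).card := by
  refine ⟨(X → ZMod 2) ⧸ edgeSpan a b S,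
    fun x => (edgeSpan a b S).mkQ (Pi.single x 1), ?_, ?_⟩
  · intro i hi
    simp only [Submodule.mkQ_apply]
    rw [Submodule.Quotient.eq]
    have h : (Pi.single (a i) 1 - Pi.single (b i) 1 : X → ZMod 2) = edgeVec a b i := by
      funext x
      simp [edgeVec, CharTwo.sub_eq_add]
    rw [h]
    exact Submodule.subset_span ⟨i, hi, rfl⟩
  · have h1 := Submodule.finrank_quotient_add_finrank (edgeSpan a b S)
    rw [Module.finrank_fintype_fun_eq_card] at h1
    have h2 : Submodule.span (ZMod 2) (Finset.univ.image
        (fun x : X => (edgeSpan a b S).mkQ (Pi.single x 1)) :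
          Set ((X → ZMod 2) ⧸ edgeSpan a b S)) = ⊤ := by
      have h3 := (Pi.basisFun (ZMod 2) X).span_eq
      have h4 := congrArg (Submodule.map (edgeSpan a b S).mkQ) h3
      rw [Submodule.map_span, Submodule.map_top, Submodule.range_mkQ] at h4
      rw [← h4]
      congr 1
      ext z
      simp
    have h3 := finrank_span_finset_le_card (R := ZMod 2) (Finset.univ.image
        (fun x : X => (edgeSpan a b S).mkQ (Pi.single x 1)))
    unfold Set.finrank at h3
    rw [h2, finrank_top] at h3
    omega

lemma finrank_edgeSpan_mono {X ι : Type*} [Fintype X] (a b : ι → X) {S T : Set ι} (h : S ⊆ T) :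
    Module.finrank (ZMod 2) (edgeSpan a b S) ≤ Module.finrank (ZMod 2) (edgeSpan a b T) :=
  Submodule.finrank_mono (Submodule.span_mono (Set.image_mono h))

lemma finrank_edgeSpan_submod {X ι : Type*} [Fintype X] (a b : ι → X) (S T : Set ι) :
    Module.finrank (ZMod 2) (edgeSpan a b (S ∪ T)) +
      Module.finrank (ZMod 2) (edgeSpan a b (S ∩ T)) ≤
    Module.finrank (ZMod 2) (edgeSpan a b S) + Module.finrank (ZMod 2) (edgeSpan a b T) := by
  have h1 := Submodule.finrank_sup_add_finrank_inf_eq (edgeSpan a b S) (edgeSpan a b T)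
  have h2 : edgeSpan a b (S ∪ T) = edgeSpan a b S ⊔ edgeSpan a b T := by
    rw [edgeSpan, Set.image_union, Submodule.span_union]; rfl
  have h3 : Module.finrank (ZMod 2) (edgeSpan a b (S ∩ T)) ≤
      Module.finrank (ZMod 2) (edgeSpan a b S ⊓ edgeSpan a b T : Submodule _ _) :=
    Submodule.finrank_mono (le_inf (Submodule.span_mono (Set.image_mono Set.inter_subset_left))
      (Submodule.span_mono (Set.image_mono Set.inter_subset_right)))
  rw [h2]
  omega

/-- Tutte and Nash-Williams, for three trees: if every partition of `X` into `q` classes is crossed by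
at least `3 (q - 1)` edges, the edges can be coloured with three colours such that each colour
class connects `X`. This is Rado's theorem on the pairs (edge, colour), with the sum over the
colours of the graphic ranks as the submodular function. -/
theorem tree_packing {X ι : Type u} [Fintype X] [Nonempty X] [Fintype ι] (a b : ι → X)
    (hpart : ∀ (κ : Type u) (p : X → κ), 3 * (Finset.univ.image p).card ≤
      (Finset.univ.filter fun i => p (a i) ≠ p (b i)).card + 3) :
    ∃ c : ι → Fin 3, ∀ j, edgeSpan a b {i | c i = j} = sumZero X := by
  set r : Set ι → ℕ := fun S => Module.finrank (ZMod 2) (edgeSpan a b S) with hr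
  have hrmono : ∀ {S T : Set ι}, S ⊆ T → r S ≤ r T := fun h => finrank_edgeSpan_mono a b h
  have hn := finrank_sumZero X
  have hrle : ∀ S, r S ≤ Module.finrank (ZMod 2) (sumZero X) := fun S =>
    Submodule.finrank_mono (edgeSpan_le_sumZero a b S)
  let f : Finset (ι × Fin 3) → ℕ := fun S => ∑ j : Fin 3, r {i | (i, j) ∈ S}
  obtain ⟨B, hBA, hB1, hB⟩ := rado_defect f
    (fun S T h => Finset.sum_le_sum fun j _ => hrmono fun i hi => h hi)
    (fun S T => by
      simp only [f, ← Finset.sum_add_distrib]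
      refine Finset.sum_le_sum fun j _ => ?_
      have := finrank_edgeSpan_submod a b {i | (i, j) ∈ S} {i | (i, j) ∈ T}
      have h1 : {i | (i, j) ∈ S ∪ T} = {i | (i, j) ∈ S} ∪ {i | (i, j) ∈ T} := by
        ext; simp
      have h2 : {i | (i, j) ∈ S ∩ T} = {i | (i, j) ∈ S} ∩ {i | (i, j) ∈ T} := by
        ext; simp
      rw [h1, h2]
      exact this)
    (3 * Module.finrank (ZMod 2) (sumZero X)) (Fintype.card ι) _
    (fun i => Finset.univ.image fun j : Fin 3 => (i, j)) rfl (by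
      intro K
      have hf : f (K.biUnion fun i => Finset.univ.image fun j : Fin 3 => (i, j)) = 3 * r K := by
        have : ∀ j : Fin 3, {i | (i, j) ∈ K.biUnion
            fun i => Finset.univ.image fun j : Fin 3 => (i, j)} = (K : Set ι) := by
          intro j; ext i; simp
        simp only [f, this]
        simp
      rw [hf]
      obtain ⟨κ, p, hp1, hp2⟩ := finrank_edgeSpan_lower a b (K : Set ι)
      have h1 := hpart κ p
      have h2 : (Finset.univ.filter fun i => p (a i) ≠ p (b i)).card + K.card ≤
          Fintype.card ι := by
        rw [← Finset.card_union_of_disjoint]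
        · exact Finset.card_le_univ _
        · rw [Finset.disjoint_left]
          intro i hi hiK
          exact (Finset.mem_filter.mp hi).2 (hp1 i hiK)
      change Fintype.card X ≤ r K + _ at hp2
      omega)
  have hfin := hB Finset.univ
  rw [Finset.card_univ] at hfin
  have hS : ∀ j : Fin 3, {i | (i, j) ∈ Finset.univ.biUnion B} = {i | (i, j) ∈ B i} := by
    intro j
    ext i
    simp only [Finset.mem_biUnion, Finset.mem_univ, true_and, Set.mem_ofPred_eq]
    constructor
    · rintro ⟨i', hi'⟩
      have := hBA i' hi'
      simp at this
      rwa [this] at hi'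
    · exact fun h => ⟨i, h⟩
  let c : ι → Fin 3 := fun i => if h : ∃ j, (i, j) ∈ B i then h.choose else 0
  have hc : ∀ i j, (i, j) ∈ B i → c i = j := by
    intro i j hij
    have hex : ∃ j, (i, j) ∈ B i := ⟨j, hij⟩
    have h1 : c i = hex.choose := by simp only [c]; rw [dif_pos hex]
    have h2 := Finset.card_le_one.mp (hB1 i) _ hex.choose_spec _ hij
    rw [h1]
    exact (Prod.mk.inj h2).2
  refine ⟨c, fun j => ?_⟩
  have hle : ∀ j, r {i | (i, j) ∈ B i} ≤ r {i | c i = j} := fun j => hrmono fun i hi => hc i j hi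
  have hsum : 3 * Module.finrank (ZMod 2) (sumZero X) ≤ ∑ j : Fin 3, r {i | c i = j} := by
    have : f (Finset.univ.biUnion B) ≤ ∑ j : Fin 3, r {i | c i = j} := by
      simp only [f, hS]
      exact Finset.sum_le_sum fun j _ => hle j
    omega
  apply Submodule.eq_of_le_of_finrank_le (edgeSpan_le_sumZero a b _)
  change _ ≤ r {i | c i = j}
  rw [Fin.sum_univ_three] at hsum
  have h0 := hrle {i | c i = 0}
  have h1 := hrle {i | c i = 1}
  have h2 := hrle {i | c i = 2}
  fin_cases j <;> simp only [Fin.zero_eta, Fin.mk_one, Fin.reduceFinMk] <;> omega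

/-- A set of edges that connects `X` crosses every nontrivial cut. -/
lemma exists_crossing {X ι : Type*} [Fintype X] (a b : ι → X) (S : Set ι)
    (h : edgeSpan a b S = sumZero X) (Y : Finset X) (hY : Y.Nonempty) (hY' : Y ≠ Finset.univ) :
    ∃ i ∈ S, ¬ (a i ∈ Y ↔ b i ∈ Y) := by
  by_contra hcon
  push Not at hcon
  obtain ⟨y, hy⟩ := hY
  obtain ⟨z, hz⟩ : ∃ z, z ∉ Y := by
    by_contra hall
    push Not at hall
    exact hY' (Finset.eq_univ_iff_forall.mpr hall)
  let φ : (X → ZMod 2) →ₗ[ZMod 2] ZMod 2 :=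
    ∑ x ∈ Y, LinearMap.proj (R := ZMod 2) (φ := fun _ : X => ZMod 2) x
  have hφ : ∀ u v : X, φ (Pi.single u 1 + Pi.single v 1) =
      (if u ∈ Y then 1 else 0) + (if v ∈ Y then 1 else 0) := by
    intro u v
    simp [φ, Finset.sum_add_distrib, Pi.single_apply]
  have hker : edgeSpan a b S ≤ LinearMap.ker φ := by
    rw [edgeSpan, Submodule.span_le]
    rintro _ ⟨i, hi, rfl⟩
    change φ (Pi.single (a i) 1 + Pi.single (b i) 1) = 0
    rw [hφ]
    by_cases hai : a i ∈ Y
    · simp [hai, (hcon i hi).mp hai, CharTwo.add_self_eq_zero]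
    · have : b i ∉ Y := fun hb => hai ((hcon i hi).mpr hb)
      simp [hai, this]
  have hmem : (Pi.single y 1 + Pi.single z 1 : X → ZMod 2) ∈ sumZero X := by
    rw [mem_sumZero]
    simp [Finset.sum_add_distrib, CharTwo.add_self_eq_zero]
  rw [← h] at hmem
  have h0 : φ (Pi.single y 1 + Pi.single z 1) = 0 := hker hmem
  rw [hφ] at h0
  simp [hy, hz] at h0

/-- A set of edges that connects `X` contains a `T`-join for every vertex set `T` of even size, given
as its indicator `τ`. -/
lemma exists_join {X ι : Type*} [Fintype X] [Fintype ι] (a b : ι → X) (S : Set ι)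
    (h : edgeSpan a b S = sumZero X) (τ : X → ZMod 2) (hτ : ∑ x, τ x = 0) :
    ∃ J : Finset ι, (∀ i ∈ J, i ∈ S) ∧ ∑ i ∈ J, edgeVec a b i = τ := by
  have hmem : τ ∈ edgeSpan a b S := by rw [h, mem_sumZero]; exact hτ
  clear hτ
  rw [edgeSpan] at hmem
  induction hmem using Submodule.span_induction with
  | mem x hx =>
    obtain ⟨i, hi, rfl⟩ := hx
    exact ⟨{i}, by simpa using hi, by simp⟩
  | zero => exact ⟨∅, by simp, by simp⟩
  | add x y _ _ hx hy =>
    obtain ⟨J, hJ, rfl⟩ := hx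
    obtain ⟨K, hK, rfl⟩ := hy
    refine ⟨symmDiff J K, ?_, ?_⟩
    · intro i hi
      rcases Finset.mem_symmDiff.mp hi with h | h
      · exact hJ i h.1
      · exact hK i h.1
    · have h1 := Finset.sum_sdiff (f := edgeVec a b) (Finset.inter_subset_left : J ∩ K ⊆ J)
      have h2 := Finset.sum_sdiff (f := edgeVec a b) (Finset.inter_subset_right : J ∩ K ⊆ K)
      rw [Finset.sdiff_inter_self_left] at h1
      rw [Finset.sdiff_inter_self_right] at h2
      rw [symmDiff_def, Finset.sup_eq_union, Finset.sum_union, ← h1, ← h2]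
      · have h3 : ∀ z : X → ZMod 2, z + z = 0 := by
          intro z; funext v; exact CharTwo.add_self_eq_zero _
        have h4 := h3 (∑ x ∈ J ∩ K, edgeVec a b x)
        rw [add_add_add_comm, h4, add_zero]
      · exact disjoint_sdiff_sdiff
  | smul c x _ hx =>
    obtain ⟨J, hJ, rfl⟩ := hx
    rcases (show ∀ c : ZMod 2, c = 0 ∨ c = 1 by decide) c with rfl | rfl
    · exact ⟨∅, by simp, by simp⟩
    · exact ⟨J, hJ, by simp⟩

/-! ### Cuts and partitions -/

/-- The cut of `X`, each edge recorded as the dart `(u, v)` leaving `X`. -/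
def dartCut {V : Type*} [Fintype V] (G : SimpleGraph V) (X : Finset V) : Finset (V × V) :=
  Finset.univ.filter fun d => d.1 ∈ X ∧ d.2 ∉ X ∧ G.Adj d.1 d.2

lemma mem_dartCut {V : Type*} [Fintype V] {G : SimpleGraph V} {X : Finset V} {d : V × V} :
    d ∈ dartCut G X ↔ d.1 ∈ X ∧ d.2 ∉ X ∧ G.Adj d.1 d.2 := by
  simp [dartCut]

lemma card_graphCut_le {V : Type*} [Fintype V] (G : SimpleGraph V) (X : Finset V) :
    (graphCut G X).card ≤ (dartCut G X).card := by
  refine (Finset.card_le_card (t := (dartCut G X).image fun d => s(d.1, d.2)) ?_).trans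
    Finset.card_image_le
  intro e he
  simp only [graphCut, Finset.mem_filter, Finset.mem_univ, true_and] at he
  obtain ⟨he, u, v, rfl, hu, hv⟩ := he
  exact Finset.mem_image.mpr ⟨(u, v), mem_dartCut.mpr ⟨hu, hv, he⟩, rfl⟩

lemma card_dartCut_compl {V : Type*} [Fintype V] (G : SimpleGraph V) (X : Finset V) :
    (dartCut G Xᶜ).card = (dartCut G X).card := by
  apply Finset.card_bij (fun d _ => d.swap)
  · intro d hd
    rw [mem_dartCut] at hd ⊢
    simp only [Finset.mem_compl, not_not] at hd
    exact ⟨hd.2.1, hd.1, hd.2.2.symm⟩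
  · intro d _ d' _ h
    exact Prod.swap_injective h
  · intro d hd
    rw [mem_dartCut] at hd
    refine ⟨d.swap, ?_, by simp⟩
    rw [mem_dartCut]
    simp only [Finset.mem_compl, not_not]
    exact ⟨hd.2.1, hd.1, hd.2.2.symm⟩

/-- The ordered pairs of adjacent vertices of `W` in different classes of `p`. Each edge inside `W`
gives two of them, so these are the crossing edges of the doubled graph. -/
def crossDarts {V κ : Type*} [Fintype V] (G : SimpleGraph V) (W : Finset V) (p : V → κ) :
    Finset (V × V) :=
  Finset.univ.filter fun d => (d.1 ∈ W ∧ d.2 ∈ W ∧ G.Adj d.1 d.2) ∧ p d.1 ≠ p d.2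

lemma sum_card_dartCut_parts {V κ : Type*} [Fintype V] (G : SimpleGraph V) (W : Finset V)
    (p : V → κ) :
    ∑ c ∈ W.image p, (dartCut G (W.filter fun v => p v = c)).card =
      (crossDarts G W p).card + (dartCut G W).card := by
  rw [← Finset.card_union_of_disjoint]
  · rw [Finset.card_eq_sum_card_fiberwise (f := fun d => p d.1) (t := W.image p)]
    · apply Finset.sum_congr rfl
      intro c _
      congr 1
      ext d
      simp only [mem_dartCut, crossDarts, Finset.mem_filter, Finset.mem_union, Finset.mem_univ,
        true_and]
      constructor
      · rintro ⟨⟨h1, rfl⟩, h2, h3⟩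
        by_cases h4 : d.2 ∈ W
        · exact ⟨Or.inl ⟨⟨h1, h4, h3⟩, fun h => h2 ⟨h4, h.symm⟩⟩, rfl⟩
        · exact ⟨Or.inr ⟨h1, h4, h3⟩, rfl⟩
      · rintro ⟨⟨⟨h1, h2, h3⟩, h4⟩ | ⟨h1, h2, h3⟩, rfl⟩
        · exact ⟨⟨h1, rfl⟩, fun h => h4 h.2.symm, h3⟩
        · exact ⟨⟨h1, rfl⟩, fun h => h2 h.1, h3⟩
    · intro d hd
      simp only [crossDarts, Finset.coe_union, Set.mem_union, Finset.mem_coe, Finset.mem_filter,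
        Finset.mem_univ, true_and, mem_dartCut] at hd
      apply Finset.mem_coe.mpr
      rcases hd with hd | hd
      · exact Finset.mem_image_of_mem _ hd.1.1
      · exact Finset.mem_image_of_mem _ hd.1
  · rw [Finset.disjoint_left]
    intro d hd hd'
    simp only [crossDarts, Finset.mem_filter] at hd
    exact (mem_dartCut.mp hd').2.1 hd.2.1.2.1

/-! ### Connectivity in cut form -/

/-- `R` connects `U`, in cut form: every nonempty proper subset of `U` is left by some `R`-pair inside
`U`. -/
def ConnOn {V : Type*} (U : Finset V) (R : V → V → Prop) : Prop :=
  ∀ X ⊆ U, X.Nonempty → X ≠ U → ∃ a ∈ X, ∃ b ∈ U, b ∉ X ∧ R a b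

/-- `R` connects `U` once an additional edge between `u₁` and `u₂` is granted. -/
def ConnOnVia {V : Type*} (U : Finset V) (u₁ u₂ : V) (R : V → V → Prop) : Prop :=
  ∀ X ⊆ U, X.Nonempty → X ≠ U → (u₁ ∈ X ↔ u₂ ∈ X) → ∃ a ∈ X, ∃ b ∈ U, b ∉ X ∧ R a b

/-- If `R` connects `U'`, and connects `W` with the help of an edge `u₁u₂`, then `R` connects
`U' ∪ W` as soon as `u₁` and `u₂` both have `R`-neighbours in `U'`: the path through `U'` replaces
the helping edge. -/
lemma ConnOn.glue {V : Type*} {U' W : Finset V} {R : V → V → Prop} (hR : ∀ a b, R a b → R b a)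
    (hdisj : Disjoint U' W) (hU : ConnOn U' R) {u₁ u₂ y₁ y₂ : V} (hW : ConnOnVia W u₁ u₂ R)
    (hu₁ : u₁ ∈ W) (hu₂ : u₂ ∈ W) (hy₁ : y₁ ∈ U') (hy₂ : y₂ ∈ U')
    (h₁ : R y₁ u₁) (h₂ : R y₂ u₂) : ConnOn (U' ∪ W) R := by
  intro X hX hne hX'
  by_cases hc : (X ∩ U').Nonempty ∧ X ∩ U' ≠ U'
  · obtain ⟨a, ha, b, hb, hbX, hab⟩ := hU _ Finset.inter_subset_right hc.1 hc.2
    refine ⟨a, (Finset.mem_inter.mp ha).1, b, Finset.mem_union_left _ hb, ?_, hab⟩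
    exact fun h => hbX (Finset.mem_inter.mpr ⟨h, hb⟩)
  by_cases hemp : (X ∩ U').Nonempty
  · have hsub : U' ⊆ X := by
      have : X ∩ U' = U' := by
        by_contra h; exact hc ⟨hemp, h⟩
      rw [← this]; exact Finset.inter_subset_left
    by_cases k₁ : u₁ ∈ X
    swap
    · exact ⟨y₁, hsub hy₁, u₁, Finset.mem_union_right _ hu₁, k₁, h₁⟩
    by_cases k₂ : u₂ ∈ X
    swap
    · exact ⟨y₂, hsub hy₂, u₂, Finset.mem_union_right _ hu₂, k₂, h₂⟩
    obtain ⟨a, ha, b, hb, hbX, hab⟩ := hW (X ∩ W) Finset.inter_subset_right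
      ⟨u₁, Finset.mem_inter.mpr ⟨k₁, hu₁⟩⟩
      (by
        intro h
        apply hX'
        apply Finset.Subset.antisymm hX
        exact Finset.union_subset hsub (by rw [← h]; exact Finset.inter_subset_left))
      (by simp [k₁, k₂, hu₁, hu₂])
    refine ⟨a, (Finset.mem_inter.mp ha).1, b, Finset.mem_union_right _ hb, ?_, hab⟩
    exact fun h => hbX (Finset.mem_inter.mpr ⟨h, hb⟩)
  · have hno : ∀ y ∈ U', y ∉ X := fun y hy hyX => hemp ⟨y, Finset.mem_inter.mpr ⟨hyX, hy⟩⟩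
    have hXW : X ⊆ W := by
      intro z hz
      rcases Finset.mem_union.mp (hX hz) with h | h
      · exact absurd hz (hno z h)
      · exact h
    by_cases k₁ : u₁ ∈ X
    · exact ⟨u₁, k₁, y₁, Finset.mem_union_left _ hy₁, hno _ hy₁, hR _ _ h₁⟩
    by_cases k₂ : u₂ ∈ X
    · exact ⟨u₂, k₂, y₂, Finset.mem_union_left _ hy₂, hno _ hy₂, hR _ _ h₂⟩
    obtain ⟨a, ha, b, hb, hbX, hab⟩ := hW X hXW hne (by rintro rfl; exact k₁ hu₁)
      (by simp [k₁, k₂])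
    exact ⟨a, ha, b, Finset.mem_union_right _ hb, hbX, hab⟩

/-! ### Multiplicities from sets of darts -/

/-- The multiplicity function of a set of darts. As an edge has two darts, sets of darts of `G` are the
same as submultigraphs of the doubled graph `2G`, with the two copies of an edge distinguished. -/
def dartMult {V : Type*} (D : Finset (V × V)) (e : Sym2 V) : ℕ :=
  (D.filter fun d => s(d.1, d.2) = e).card

lemma dartMult_le_two {V : Type*} (D : Finset (V × V)) (e : Sym2 V) : dartMult D e ≤ 2 := by
  induction e with
  | _ a b =>
  refine (Finset.card_le_card (t := {(a, b), (b, a)}) ?_).trans Finset.card_le_two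
  intro d hd
  have := (Finset.mem_filter.mp hd).2
  rw [Sym2.eq_iff] at this
  simp only [Finset.mem_insert, Finset.mem_singleton, Prod.ext_iff]
  exact this

lemma dartMult_lt_two {V : Type*} (D : Finset (V × V)) (a b : V) (h : (a, b) ∉ D) :
    dartMult D s(a, b) < 2 := by
  refine Nat.lt_succ_of_le ((Finset.card_le_card (t := {(b, a)}) ?_).trans
    (Finset.card_singleton _).le)
  intro d hd
  obtain ⟨hdD, hd⟩ := Finset.mem_filter.mp hd
  rw [Sym2.eq_iff] at hd
  simp only [Finset.mem_singleton, Prod.ext_iff]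
  rcases hd with hd | hd
  · exact absurd (show d = (a, b) from Prod.ext hd.1 hd.2) (by rintro rfl; exact h hdD)
  · exact hd

lemma dartMult_ne_zero {V : Type*} (D : Finset (V × V)) (a b : V) :
    dartMult D s(a, b) ≠ 0 ↔ (a, b) ∈ D ∨ (b, a) ∈ D := by
  rw [dartMult, Finset.card_ne_zero]
  constructor
  · rintro ⟨d, hd⟩
    obtain ⟨hdD, hd⟩ := Finset.mem_filter.mp hd
    rw [Sym2.eq_iff] at hd
    rcases hd with hd | hd
    · left; rw [← hd.1, ← hd.2]; exact hdD
    · right; rw [← hd.1, ← hd.2]; exact hdD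
  · rintro (h | h)
    · exact ⟨_, Finset.mem_filter.mpr ⟨h, rfl⟩⟩
    · exact ⟨_, Finset.mem_filter.mpr ⟨h, Sym2.eq_swap⟩⟩

lemma edgeDegree_dartMult {V : Type*} [Fintype V] (D : Finset (V × V))
    (hD : ∀ d ∈ D, d.1 ≠ d.2) (v : V) :
    (edgeDegree (dartMult D) v : ZMod 2) =
      ∑ d ∈ D, ((if v = d.1 then 1 else 0) + (if v = d.2 then 1 else 0)) := by
  have h1 : edgeDegree (dartMult D) v = (D.filter fun d => v ∈ s(d.1, d.2)).card := by
    rw [Finset.card_eq_sum_card_fiberwise (f := fun d : V × V => s(d.1, d.2))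
      (t := Finset.univ.filter (fun e : Sym2 V => v ∈ e))]
    · apply Finset.sum_congr rfl
      intro e he
      rw [dartMult, Finset.filter_filter]
      congr 1
      apply Finset.filter_congr
      intro d _
      constructor
      · rintro rfl
        exact ⟨(Finset.mem_filter.mp he).2, rfl⟩
      · exact fun h => h.2
    · intro d hd
      simp only [Finset.coe_filter, Set.mem_ofPred_eq] at hd
      simpa using hd.2
  rw [h1, Finset.card_filter]
  push_cast
  apply Finset.sum_congr rfl
  intro d hd
  have := hD d hd
  simp only [Sym2.mem_iff]
  by_cases h1 : v = d.1
  · have h2 : v ≠ d.2 := fun h => this (h1.symm.trans h)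
    simp [h1, this]
  · by_cases h2 : v = d.2
    · simp [h2, Ne.symm this]
    · simp [h1, h2]

lemma edgeDegree_add {V : Type*} [Fintype V] (m m' : Sym2 V → ℕ) (v : V) :
    edgeDegree (fun e => m e + m' e) v = edgeDegree m v + edgeDegree m' v := by
  simp [edgeDegree, Finset.sum_add_distrib]

/-! ### Building a piece inside one layer -/

/-- `m` is a connected submultigraph of the doubled graph `2G[U]`, with odd degrees exactly on
`{x} ∆ {y}`, whose complement in `2G[U]` connects `U` once an edge `u₁u₂` is granted. For
`u₁ = u₂` the complement itself is connected. -/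
structure IsPiece {V : Type*} [Fintype V] (G : SimpleGraph V) (U : Finset V) (x y u₁ u₂ : V)
    (m : Sym2 V → ℕ) : Prop where
  le_two : ∀ e, m e ≤ 2
  supp : ∀ a b, m s(a, b) ≠ 0 → a ∈ U ∧ b ∈ U ∧ G.Adj a b
  conn : ConnOn U fun a b => m s(a, b) ≠ 0
  coconn : ConnOnVia U u₁ u₂ fun a b => G.Adj a b ∧ m s(a, b) < 2
  deg : ∀ v, (edgeDegree m v : ZMod 2) = (if v = x then 1 else 0) + (if v = y then 1 else 0)

/-- If `2G[W]` together with one additional edge `u₁u₂` satisfies the partition condition for three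
trees, then `W` carries a piece. Of the three colour classes, the one containing the additional
edge is left to the complement; of the other two, one makes `m` connected and the other supplies
the join that corrects the parity of the degrees. -/
theorem exists_piece {V : Type u} [Fintype V] (G : SimpleGraph V) (W : Finset V)
    (u₁ u₂ : V) (hu₁ : u₁ ∈ W) (hu₂ : u₂ ∈ W)
    (hcount : ∀ (κ : Type u) (p : V → κ), 3 * (W.image p).card ≤
      (crossDarts G W p).card + (if p u₁ = p u₂ then 0 else 1) + 3)
    (x y : V) (hx : x ∈ W) (hy : y ∈ W) : ∃ m, IsPiece G W x y u₁ u₂ m := by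
  let E := {d : V × V // d.1 ∈ W ∧ d.2 ∈ W ∧ G.Adj d.1 d.2}
  let a : Option E → W := fun i => i.elim ⟨u₁, hu₁⟩ fun d => ⟨d.1.1, d.2.1⟩
  let b : Option E → W := fun i => i.elim ⟨u₂, hu₂⟩ fun d => ⟨d.1.2, d.2.2.1⟩
  have : Nonempty W := ⟨⟨u₁, hu₁⟩⟩
  obtain ⟨c, hc⟩ := tree_packing a b (by
    intro κ p
    let p' : V → κ := fun v => if h : v ∈ W then p ⟨v, h⟩ else p ⟨u₁, hu₁⟩
    have hp' : ∀ w : W, p' w = p w := fun w => by simp [p']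
    have himg : W.image p' = Finset.univ.image p := by
      ext z
      simp only [Finset.mem_image, Finset.mem_univ, true_and]
      constructor
      · rintro ⟨v, hv, rfl⟩
        exact ⟨⟨v, hv⟩, (hp' ⟨v, hv⟩).symm⟩
      · rintro ⟨w, rfl⟩
        exact ⟨w, w.2, hp' w⟩
    have h := hcount κ p'
    rw [himg] at h
    refine h.trans (Nat.add_le_add_right ?_ 3)
    rw [Finset.card_filter, Fintype.sum_option, add_comm]
    apply Nat.add_le_add
    · simp only [a, b, Option.elim, ← hp']
      by_cases h : p' u₁ = p' u₂ <;> simp [h]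
    · rw [← Finset.card_filter]
      refine (Finset.card_le_card (t := (Finset.univ.filter fun d : E =>
        p (a (some d)) ≠ p (b (some d))).image Subtype.val) ?_).trans Finset.card_image_le
      intro d hd
      obtain ⟨hd1, hd2⟩ := (Finset.mem_filter.mp hd).2
      refine Finset.mem_image.mpr ⟨⟨d, hd1⟩, Finset.mem_filter.mpr ⟨Finset.mem_univ _, ?_⟩, rfl⟩
      rw [← hp', ← hp']
      exact hd2)
  obtain ⟨α, γ, hα, hγ, hαγ⟩ : ∃ α γ : Fin 3, α ≠ c none ∧ γ ≠ c none ∧ α ≠ γ :=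
    (show ∀ β : Fin 3, ∃ α γ : Fin 3, α ≠ β ∧ γ ≠ β ∧ α ≠ γ by decide) _
  let A : Finset (Option E) := Finset.univ.filter fun i => c i = α
  let target : W → ZMod 2 := Pi.single ⟨x, hx⟩ 1 + Pi.single ⟨y, hy⟩ 1
  have htarget : target ∈ sumZero W := by
    rw [mem_sumZero]
    simp [target, Finset.sum_add_distrib, CharTwo.add_self_eq_zero]
  obtain ⟨J, hJ, hJsum⟩ := exists_join a b _ (hc γ) (target - ∑ i ∈ A, edgeVec a b i)
    ((mem_sumZero _).mp (Submodule.sub_mem _ htarget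
      (Submodule.sum_mem _ fun i _ => edgeVec_mem_sumZero a b i)))
  have hAJ : Disjoint A J := by
    rw [Finset.disjoint_left]
    intro i hi hiJ
    exact hαγ ((Finset.mem_filter.mp hi).2.symm.trans (hJ i hiJ))
  have hsum : ∑ i ∈ A ∪ J, edgeVec a b i = target := by
    rw [Finset.sum_union hAJ, hJsum]; abel
  have hcol : ∀ i ∈ A ∪ J, c i ≠ c none := by
    intro i hi
    rcases Finset.mem_union.mp hi with hi | hi
    · rw [(Finset.mem_filter.mp hi).2]; exact hα
    · rw [show c i = γ from hJ i hi]; exact hγ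
  let D : Finset (V × V) := Finset.univ.filter fun d =>
    ∃ h : d.1 ∈ W ∧ d.2 ∈ W ∧ G.Adj d.1 d.2, some (⟨d, h⟩ : E) ∈ A ∪ J
  have hD : ∀ d, d ∈ D ↔ ∃ h : d.1 ∈ W ∧ d.2 ∈ W ∧ G.Adj d.1 d.2, some (⟨d, h⟩ : E) ∈ A ∪ J :=
    fun d => by simp [D]
  have hcross : ∀ j : Fin 3, ∀ X ⊆ W, X.Nonempty → X ≠ W → ∃ i, c i = j ∧
      ¬ ((a i : V) ∈ X ↔ (b i : V) ∈ X) := by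
    intro j X hX hne hXW
    obtain ⟨v, hv⟩ := hne
    obtain ⟨w, hw, hwX⟩ := Finset.exists_of_ssubset (hX.ssubset_of_ne hXW)
    obtain ⟨i, hi, hi'⟩ := exists_crossing a b _ (hc j)
      (Finset.univ.filter fun w : W => (w : V) ∈ X) ⟨⟨v, hX hv⟩, by simpa using hv⟩
      (by
        intro h
        have : (⟨w, hw⟩ : W) ∈ Finset.univ.filter fun w : W => (w : V) ∈ X := by
          rw [h]; exact Finset.mem_univ _
        exact hwX (Finset.mem_filter.mp this).2)
    exact ⟨i, hi, by simpa using hi'⟩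
  refine ⟨dartMult D, dartMult_le_two D, ?_, ?_, ?_, ?_⟩
  · intro v w h
    rcases (dartMult_ne_zero D v w).mp h with h | h
    · obtain ⟨h, -⟩ := (hD _).mp h
      exact h
    · obtain ⟨h, -⟩ := (hD _).mp h
      exact ⟨h.2.1, h.1, h.2.2.symm⟩
  · intro X hX hne hXW
    obtain ⟨i, hi, hi'⟩ := hcross α X hX hne hXW
    match i, hi, hi' with
    | none, hi, _ => exact absurd hi.symm hα
    | some ⟨(v, w), hd⟩, hi, hi' =>
      have hmem : (v, w) ∈ D :=
        (hD _).mpr ⟨hd, Finset.mem_union_left _ (Finset.mem_filter.mpr ⟨Finset.mem_univ _, hi⟩)⟩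
      change ¬ (v ∈ X ↔ w ∈ X) at hi'
      by_cases hv : v ∈ X
      · exact ⟨v, hv, w, hd.2.1, by tauto, (dartMult_ne_zero D v w).mpr (Or.inl hmem)⟩
      · exact ⟨w, by tauto, v, hd.1, hv, (dartMult_ne_zero D w v).mpr (Or.inr hmem)⟩
  · intro X hX hne hXW hu
    obtain ⟨i, hi, hi'⟩ := hcross (c none) X hX hne hXW
    match i, hi, hi' with
    | none, _, hi' => exact absurd hu hi'
    | some ⟨(v, w), hd⟩, hi, hi' =>
      have hmem : (v, w) ∉ D := by
        intro h
        obtain ⟨h, h'⟩ := (hD _).mp h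
        exact hcol _ h' hi
      have hlt := dartMult_lt_two D v w hmem
      change ¬ (v ∈ X ↔ w ∈ X) at hi'
      by_cases hv : v ∈ X
      · exact ⟨v, hv, w, hd.2.1, by tauto, hd.2.2, hlt⟩
      · exact ⟨w, by tauto, v, hd.1, hv, hd.2.2.symm, by rw [Sym2.eq_swap]; exact hlt⟩
  · intro v
    rw [edgeDegree_dartMult D (fun d hd => by
      obtain ⟨h, -⟩ := (hD _).mp hd
      exact h.2.2.ne)]
    have hbij : ∑ d ∈ D, ((if v = d.1 then (1 : ZMod 2) else 0) + (if v = d.2 then 1 else 0)) =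
        ∑ i ∈ A ∪ J, ((if v = a i then (1 : ZMod 2) else 0) + (if v = b i then 1 else 0)) := by
      refine Finset.sum_bij (fun d hd => some ⟨d, ((hD d).mp hd).choose⟩) ?_ ?_ ?_ ?_
      · intro d hd
        exact ((hD d).mp hd).choose_spec
      · intro d _ d' _ h
        exact congrArg Subtype.val (Option.some.inj h)
      · intro i hi
        match i, hi with
        | none, hi => exact absurd rfl (hcol _ hi)
        | some ⟨d, hd⟩, hi => exact ⟨d, (hD d).mpr ⟨hd, hi⟩, rfl⟩
      · intro d hd
        rfl
    rw [hbij]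
    by_cases hv : v ∈ W
    · have h := congrFun hsum ⟨v, hv⟩
      simp only [Finset.sum_apply, edgeVec, Pi.add_apply, Pi.single_apply, target,
        Subtype.ext_iff] at h
      exact h
    · have h1 : ∀ w : W, v ≠ w := by rintro w rfl; exact hv w.2
      have h2 : v ≠ x := by rintro rfl; exact hv hx
      have h3 : v ≠ y := by rintro rfl; exact hv hy
      simp [h1, h2, h3]

/-! ### Induction along narrow cuts -/

/-- Let `U` be narrow and `U'` a maximal narrow proper subset of `U`, or empty if there is none. Every
nonempty proper part `X` of the layer `U \ U'` has a cut of size at least three: if `s ∈ X` then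
`X` lies strictly between `∅` and `U`, and if `t ∈ X` then `U` is everything and the complement of
`X` lies strictly between `U'` and `U`. -/
lemma three_le_part {V : Type*} [Fintype V] {G : SimpleGraph V} {s t : V}
    (hcut : ∀ X : Finset V, X.Nonempty → X ≠ Finset.univ → (s ∈ X ↔ t ∈ X) →
      3 ≤ (dartCut G X).card)
    {U U' : Finset V} (htU : t ∈ U → U = Finset.univ)
    (hmax : ∀ Z, U' ⊂ Z → Z ⊂ U → s ∈ Z → 3 ≤ (dartCut G Z).card)
    (hs : s ∈ U' ∨ U' = ∅) {X : Finset V} (hX : X ⊂ U \ U') (hne : X.Nonempty) :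
    3 ≤ (dartCut G X).card := by
  by_cases hsX : s ∈ X
  · have hU' : U' = ∅ := by
      rcases hs with hs | hs
      · exact absurd hs (Finset.mem_sdiff.mp (hX.1 hsX)).2
      · exact hs
    subst hU'
    rw [Finset.sdiff_empty] at hX
    exact hmax X (Finset.empty_ssubset.mpr hne) hX hsX
  by_cases htX : t ∈ X
  · have hU : U = Finset.univ := htU (Finset.mem_sdiff.mp (hX.1 htX)).1
    subst hU
    rw [← card_dartCut_compl]
    apply hmax
    · obtain ⟨w, hw, hwX⟩ := Finset.exists_of_ssubset hX
      refine Finset.ssubset_iff_subset_ne.mpr ⟨?_, ?_⟩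
      · intro v hv
        rw [Finset.mem_compl]
        exact fun hvX => (Finset.mem_sdiff.mp (hX.1 hvX)).2 hv
      · rintro rfl
        exact (Finset.mem_sdiff.mp hw).2 (Finset.mem_compl.mpr hwX)
    · rw [Finset.ssubset_univ_iff]
      intro h
      have := Finset.mem_univ t
      rw [← h] at this
      exact Finset.mem_compl.mp this htX
    · exact Finset.mem_compl.mpr hsX
  · exact hcut X hne (by rintro rfl; exact hsX (Finset.mem_univ _)) (by simp [hsX, htX])

lemma part_ssubset {V κ : Type*} {W : Finset V} {p : V → κ} (hq : 1 < (W.image p).card) (c : κ) :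
    (W.filter fun v => p v = c) ⊂ W := by
  refine Finset.filter_ssubset.mpr ?_
  by_contra hcon
  push Not at hcon
  refine absurd hq (not_lt.mpr (Finset.card_le_one.mpr ?_))
  intro a ha b hb
  obtain ⟨v, hv, rfl⟩ := Finset.mem_image.mp ha
  obtain ⟨w, hw, rfl⟩ := Finset.mem_image.mp hb
  rw [hcon v hv, hcon w hw]

lemma part_nonempty {V κ : Type*} {W : Finset V} {p : V → κ} {c : κ} (hc : c ∈ W.image p) :
    (W.filter fun v => p v = c).Nonempty := by
  obtain ⟨v, hv, rfl⟩ := Finset.mem_image.mp hc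
  exact ⟨v, Finset.mem_filter.mpr ⟨hv, rfl⟩⟩

/-- A piece on `U'` and a piece on `W` are joined by a single copy of the edge `d₁`. The complement
retains the other copy of `d₁` and at least one copy of `d₂`, which is what connects the two ends
of these edges in `W`. -/
lemma glue_piece {V : Type*} [Fintype V] {G : SimpleGraph V} {U' W : Finset V}
    (hdisj : Disjoint U' W) {s x : V} {d₁ d₂ : V × V}
    (h₁ : d₁.1 ∈ U' ∧ d₁.2 ∈ W ∧ G.Adj d₁.1 d₁.2)
    (h₂ : d₂.1 ∈ U' ∧ d₂.2 ∈ W ∧ G.Adj d₂.1 d₂.2) {m' mW : Sym2 V → ℕ}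
    (hm' : IsPiece G U' s d₁.1 s s m') (hmW : IsPiece G W d₁.2 x d₁.2 d₂.2 mW) :
    ∃ m, IsPiece G (U' ∪ W) s x s s m := by
  have hno : ∀ v, v ∈ U' → v ∈ W → False := fun v h h' => Finset.disjoint_left.mp hdisj h h'
  have hl1 : ∀ e, dartMult {d₁} e ≤ 1 := fun e =>
    (Finset.card_filter_le _ _).trans (Finset.card_singleton _).le
  have hl : ∀ a b, dartMult {d₁} s(a, b) ≠ 0 →
      G.Adj a b ∧ (a ∈ U' ∧ b ∈ W ∨ a ∈ W ∧ b ∈ U') := by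
    intro a b h
    rcases (dartMult_ne_zero _ a b).mp h with h | h
    · rw [Finset.mem_singleton] at h
      subst h
      exact ⟨h₁.2.2, Or.inl ⟨h₁.1, h₁.2.1⟩⟩
    · rw [Finset.mem_singleton] at h
      subst h
      exact ⟨h₁.2.2.symm, Or.inr ⟨h₁.2.1, h₁.1⟩⟩
  have e1 : ∀ a b, a ∈ U' → b ∈ U' → dartMult {d₁} s(a, b) = 0 ∧ mW s(a, b) = 0 := by
    intro a b ha hb
    constructor
    · by_contra h
      rcases (hl a b h).2 with h | h
      · exact hno b hb h.2
      · exact hno a ha h.1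
    · by_contra h
      exact hno a ha (hmW.supp a b h).1
  have e2 : ∀ a b, a ∈ W → m' s(a, b) = 0 := by
    intro a b ha
    by_contra h
    exact hno a (hm'.supp a b h).1 ha
  have e3 : ∀ a b, a ∈ W → b ∈ W → dartMult {d₁} s(a, b) = 0 := by
    intro a b ha hb
    by_contra h
    rcases (hl a b h).2 with h | h
    · exact hno a h.1 ha
    · exact hno b h.2 hb
  have e4 : ∀ a b, a ∈ U' → mW s(a, b) = 0 := by
    intro a b ha
    by_contra h
    exact hno a ha (hmW.supp a b h).1
  have link : ∀ d : V × V, d.1 ∈ U' ∧ d.2 ∈ W ∧ G.Adj d.1 d.2 → G.Adj d.1 d.2 ∧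
      (m' s(d.1, d.2) + dartMult {d₁} s(d.1, d.2)) + mW s(d.1, d.2) < 2 := by
    intro d hd
    have k1 := e2 d.2 d.1 hd.2.1
    rw [Sym2.eq_swap] at k1
    have k2 := e4 d.1 d.2 hd.1
    have k3 := hl1 s(d.1, d.2)
    exact ⟨hd.2.2, by omega⟩
  refine ⟨fun e => (m' e + dartMult {d₁} e) + mW e, ?_, ?_, ?_, ?_, ?_⟩
  · intro e
    induction e with
    | _ a b =>
    have k1 := hm'.le_two s(a, b)
    have k2 := hl1 s(a, b)
    have k3 := hmW.le_two s(a, b)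
    by_cases h : m' s(a, b) = 0
    · by_cases h' : mW s(a, b) = 0
      · omega
      · obtain ⟨ha, hb, -⟩ := hmW.supp a b h'
        have := e3 a b ha hb
        omega
    · obtain ⟨ha, hb, -⟩ := hm'.supp a b h
      have := e1 a b ha hb
      omega
  · intro a b h
    by_cases k1 : m' s(a, b) = 0
    · by_cases k2 : mW s(a, b) = 0
      · obtain ⟨k3, k4⟩ := hl a b (by omega)
        rcases k4 with k4 | k4
        · exact ⟨Finset.mem_union_left _ k4.1, Finset.mem_union_right _ k4.2, k3⟩
        · exact ⟨Finset.mem_union_right _ k4.1, Finset.mem_union_left _ k4.2, k3⟩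
      · obtain ⟨ha, hb, hab⟩ := hmW.supp a b k2
        exact ⟨Finset.mem_union_right _ ha, Finset.mem_union_right _ hb, hab⟩
    · obtain ⟨ha, hb, hab⟩ := hm'.supp a b k1
      exact ⟨Finset.mem_union_left _ ha, Finset.mem_union_left _ hb, hab⟩
  · have hlink : (m' s(d₁.1, d₁.2) + dartMult {d₁} s(d₁.1, d₁.2)) + mW s(d₁.1, d₁.2) ≠ 0 := by
      have := (dartMult_ne_zero {d₁} d₁.1 d₁.2).mpr (Or.inl (by simp))
      omega
    refine ConnOn.glue (u₁ := d₁.2) (u₂ := d₁.2) (y₁ := d₁.1) (y₂ := d₁.1) ?_ hdisj ?_ ?_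
      h₁.2.1 h₁.2.1 h₁.1 h₁.1 hlink hlink
    · intro a b h
      rw [Sym2.eq_swap]; exact h
    · intro X hX hne hX'
      obtain ⟨a, ha, b, hb, hbX, hab⟩ := hm'.conn X hX hne hX'
      exact ⟨a, ha, b, hb, hbX, by omega⟩
    · intro X hX hne hX' _
      obtain ⟨a, ha, b, hb, hbX, hab⟩ := hmW.conn X hX hne hX'
      exact ⟨a, ha, b, hb, hbX, by omega⟩
  · have hco : ConnOn (U' ∪ W) fun a b =>
        G.Adj a b ∧ (m' s(a, b) + dartMult {d₁} s(a, b)) + mW s(a, b) < 2 := by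
      refine ConnOn.glue (u₁ := d₁.2) (u₂ := d₂.2) (y₁ := d₁.1) (y₂ := d₂.1) ?_ hdisj ?_ ?_
        h₁.2.1 h₂.2.1 h₁.1 h₂.1 (link d₁ h₁) (link d₂ h₂)
      · intro a b h
        rw [Sym2.eq_swap]; exact ⟨h.1.symm, h.2⟩
      · intro X hX hne hX'
        obtain ⟨a, ha, b, hb, hbX, hab, hlt⟩ := hm'.coconn X hX hne hX' Iff.rfl
        have := e1 a b (hX ha) hb
        exact ⟨a, ha, b, hb, hbX, hab, by omega⟩
      · intro X hX hne hX' hu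
        obtain ⟨a, ha, b, hb, hbX, hab, hlt⟩ := hmW.coconn X hX hne hX' hu
        have := e2 a b (hX ha)
        have := e3 a b (hX ha) hb
        exact ⟨a, ha, b, hb, hbX, hab, by omega⟩
    exact fun X hX hne hX' _ => hco X hX hne hX'
  · intro v
    rw [edgeDegree_add, edgeDegree_add]
    push_cast
    rw [hm'.deg, hmW.deg, edgeDegree_dartMult _ (by
      intro d hd
      rw [Finset.mem_singleton] at hd
      rw [hd]
      exact h₁.2.2.ne), Finset.sum_singleton]
    exact (show ∀ a b c d : ZMod 2, a + b + (b + c) + (c + d) = a + d by decide) _ _ _ _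

/-- Every narrow set `U` (it contains `s` and its cut has at most two edges; all of `V` qualifies)
carries a piece with odd degrees `{s} ∆ {x}`, where `x` is `t` or an end of an edge leaving `U`.
The induction removes the last layer `W = U \ U'`, with `U'` a maximal narrow proper subset. If
the parts of a partition of `W` into `q` classes have cuts of size at least three, the doubled
graph has at least `3 q - 4` edges across; the missing one is the additional edge `d₁.2 d₂.2`, or
comes from the class containing both `d₁.2` and `d₂.2`, whose cut has at least four edges. -/
theorem exists_narrow_piece {V : Type u} [Fintype V] {G : SimpleGraph V} {s t : V}
    (hcut : ∀ X : Finset V, X.Nonempty → X ≠ Finset.univ → (s ∈ X ↔ t ∈ X) →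
      3 ≤ (dartCut G X).card)
    (hconn : ∀ X : Finset V, X.Nonempty → X ≠ Finset.univ → (dartCut G X).Nonempty) :
    ∀ (n : ℕ) (U : Finset V), U.card = n → s ∈ U → (dartCut G U).card ≤ 2 →
      ∀ x ∈ U, (x = t ∨ ∃ z, z ∉ U ∧ G.Adj x z) → ∃ m, IsPiece G U s x s s m := by
  intro n
  induction n using Nat.strong_induction_on with
  | _ n ih =>
  intro U hn hsU hU x hxU hx
  have ht : ∀ Z : Finset V, s ∈ Z → (dartCut G Z).card ≤ 2 → t ∈ Z → Z = Finset.univ := by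
    intro Z hsZ hZ htZ
    by_contra hne
    have := hcut Z ⟨s, hsZ⟩ hne (by simp [hsZ, htZ])
    omega
  have htU := ht U hsU hU
  by_cases hS : (Finset.univ.filter fun Z : Finset V =>
      Z ⊂ U ∧ s ∈ Z ∧ (dartCut G Z).card ≤ 2).Nonempty
  swap
  · have hmax : ∀ Z, (∅ : Finset V) ⊂ Z → Z ⊂ U → s ∈ Z → 3 ≤ (dartCut G Z).card := by
      intro Z _ hZU hsZ
      by_contra h
      exact hS ⟨Z, Finset.mem_filter.mpr ⟨Finset.mem_univ _, hZU, hsZ, by omega⟩⟩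
    refine exists_piece G U s s hsU hsU ?_ s x hsU hxU
    intro κ p
    rcases Nat.lt_or_ge 1 (U.image p).card with hq | hq
    · have h1 := sum_card_dartCut_parts G U p
      have h2 : ∑ c ∈ U.image p, 3 ≤
          ∑ c ∈ U.image p, (dartCut G (U.filter fun v => p v = c)).card :=
        Finset.sum_le_sum fun c hc => three_le_part hcut htU hmax (Or.inr rfl)
          (by rw [Finset.sdiff_empty]; exact part_ssubset hq c) (part_nonempty hc)
      rw [Finset.sum_const, smul_eq_mul] at h2
      omega
    · omega
  obtain ⟨U', hU'S, hU'max⟩ := Finset.exists_max_image _ Finset.card hS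
  obtain ⟨-, hU'U, hsU', hU'⟩ := Finset.mem_filter.mp hU'S
  have hmax : ∀ Z, U' ⊂ Z → Z ⊂ U → s ∈ Z → 3 ≤ (dartCut G Z).card := by
    intro Z hZ hZU hsZ
    by_contra h
    have h1 := hU'max Z (Finset.mem_filter.mpr ⟨Finset.mem_univ _, hZU, hsZ, by omega⟩)
    have h2 := Finset.card_lt_card hZ
    omega
  have hU'univ : U' ≠ Finset.univ := by
    rintro rfl
    exact hU'U.2 (Finset.subset_univ _)
  have htU' : t ∉ U' := fun h => hU'univ (ht U' hsU' hU' h)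
  set W := U \ U' with hW
  have hWmem : ∀ v, v ∈ W ↔ v ∈ U ∧ v ∉ U' := fun v => Finset.mem_sdiff
  have hWsub : dartCut G W ⊆ (dartCut G U').image Prod.swap ∪ dartCut G U := by
    intro d hd
    obtain ⟨h1, h2, h3⟩ := mem_dartCut.mp hd
    obtain ⟨h4, h5⟩ := (hWmem _).mp h1
    by_cases h6 : d.2 ∈ U
    · have h7 : d.2 ∈ U' := by
        by_contra h7; exact h2 ((hWmem _).mpr ⟨h6, h7⟩)
      exact Finset.mem_union_left _ (Finset.mem_image.mpr
        ⟨d.swap, mem_dartCut.mpr ⟨h7, h5, h3.symm⟩, by simp⟩)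
    · exact Finset.mem_union_right _ (mem_dartCut.mpr ⟨h4, h6, h3⟩)
  have hWcard : (dartCut G W).card ≤ 4 := by
    have h1 := Finset.card_le_card hWsub
    have h2 := Finset.card_union_le ((dartCut G U').image Prod.swap) (dartCut G U)
    have h3 := Finset.card_image_le (s := dartCut G U') (f := Prod.swap)
    omega
  have hWne : W.Nonempty := by
    obtain ⟨v, hv, hvU⟩ := Finset.exists_of_ssubset hU'U
    exact ⟨v, (hWmem v).mpr ⟨hv, hvU⟩⟩
  -- An edge leaving both `U'` and `U` would leave at most two edges for the cut of `W`.
  have hlink : ∀ d ∈ dartCut G U', d.2 ∈ W := by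
    intro d hd
    obtain ⟨hd1, hd2, hd3⟩ := mem_dartCut.mp hd
    by_contra hdW
    have hdU : d.2 ∉ U := fun h => hdW ((hWmem _).mpr ⟨h, hd2⟩)
    have hdcut : d ∈ dartCut G U := mem_dartCut.mpr ⟨hU'U.1 hd1, hdU, hd3⟩
    have htU0 : t ∉ U := fun h => hdU (by rw [htU h]; exact Finset.mem_univ _)
    have hsW : s ∉ W := fun h => ((hWmem s).mp h).2 hsU'
    have h3 := hcut W hWne (by intro h; rw [h] at hsW; exact hsW (Finset.mem_univ _))
      (by simp [hsW, hWmem, htU0])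
    have hsub : dartCut G W ⊆
        ((dartCut G U').erase d).image Prod.swap ∪ (dartCut G U).erase d := by
      intro e he
      have he1 := (hWmem _).mp (mem_dartCut.mp he).1
      rcases Finset.mem_union.mp (hWsub he) with h | h
      · obtain ⟨e', he', rfl⟩ := Finset.mem_image.mp h
        refine Finset.mem_union_left _ (Finset.mem_image_of_mem _ (Finset.mem_erase.mpr ⟨?_, he'⟩))
        rintro rfl
        exact hdU he1.1
      · refine Finset.mem_union_right _ (Finset.mem_erase.mpr ⟨?_, h⟩)
        rintro rfl
        exact he1.2 hd1
    have h4 := Finset.card_le_card hsub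
    have h5 := Finset.card_union_le (((dartCut G U').erase d).image Prod.swap)
      ((dartCut G U).erase d)
    have h6 := Finset.card_image_le (s := (dartCut G U').erase d) (f := Prod.swap)
    have h7 := Finset.card_erase_of_mem hd
    have h8 := Finset.card_erase_of_mem hdcut
    omega
  obtain ⟨d₁, hd₁⟩ := hconn U' ⟨s, hsU'⟩ hU'univ
  obtain ⟨d₂, hd₂, hd₁₂⟩ : ∃ d₂ ∈ dartCut G U', ∀ d ∈ dartCut G U', d = d₁ ∨ d = d₂ := by
    have h1 := Finset.card_erase_of_mem hd₁
    rcases ((dartCut G U').erase d₁).eq_empty_or_nonempty with h | ⟨d₂, hd₂⟩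
    · refine ⟨d₁, hd₁, fun d hd => Or.inl ?_⟩
      by_contra hne
      have := Finset.mem_erase.mpr ⟨hne, hd⟩
      rw [h] at this
      exact absurd this (Finset.notMem_empty _)
    · refine ⟨d₂, (Finset.mem_erase.mp hd₂).2, fun d hd => ?_⟩
      by_contra hne
      push Not at hne
      exact hne.2 (Finset.card_le_one.mp (by omega) d (Finset.mem_erase.mpr ⟨hne.1, hd⟩) d₂ hd₂)
  have hd₁' := mem_dartCut.mp hd₁
  have hd₂' := mem_dartCut.mp hd₂
  have hxW : x ∈ W := by
    refine (hWmem x).mpr ⟨hxU, fun hxU' => ?_⟩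
    rcases hx with rfl | ⟨z, hz, hxz⟩
    · exact htU' hxU'
    · have := hlink (x, z) (mem_dartCut.mpr ⟨hxU', fun h => hz (hU'U.1 h), hxz⟩)
      exact hz ((hWmem _).mp this).1
  have hthree : ∀ X, X ⊂ W → X.Nonempty → 3 ≤ (dartCut G X).card := fun X hX hne =>
    three_le_part hcut htU hmax (Or.inl hsU') hX hne
  -- A part receiving every edge that leaves `U'` has a cut of at least four edges.
  have hfour : ∀ X, X ⊂ W → d₁.2 ∈ X → d₂.2 ∈ X → 4 ≤ (dartCut G X).card := by
    intro X hX h1 h2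
    have hall : ∀ d ∈ dartCut G U', d.2 ∈ X := by
      intro d hd
      rcases hd₁₂ d hd with rfl | rfl
      · exact h1
      · exact h2
    have hXU' : ∀ v ∈ X, v ∉ U' := fun v hv => ((hWmem v).mp (hX.1 hv)).2
    have h3 : 3 ≤ (dartCut G (U' ∪ X)).card := by
      apply hmax
      · refine Finset.ssubset_iff_subset_ne.mpr ⟨Finset.subset_union_left, fun h => ?_⟩
        exact hXU' _ h1 (by rw [h]; exact Finset.mem_union_right _ h1)
      · obtain ⟨w, hw, hwX⟩ := Finset.exists_of_ssubset hX
        refine Finset.ssubset_iff_subset_ne.mpr ⟨Finset.union_subset hU'U.1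
          (hX.1.trans Finset.sdiff_subset), fun h => ?_⟩
        have hwU := ((hWmem w).mp hw).1
        rw [← h] at hwU
        rcases Finset.mem_union.mp hwU with h | h
        · exact ((hWmem w).mp hw).2 h
        · exact hwX h
      · exact Finset.mem_union_left _ hsU'
    have hsub : insert d₁.swap (dartCut G (U' ∪ X)) ⊆ dartCut G X := by
      intro e he
      rcases Finset.mem_insert.mp he with rfl | he
      · exact mem_dartCut.mpr ⟨h1, fun h => hXU' _ h hd₁'.1, hd₁'.2.2.symm⟩
      · obtain ⟨he1, he2, he3⟩ := mem_dartCut.mp he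
        have he2X : e.2 ∉ X := fun h => he2 (Finset.mem_union_right _ h)
        rcases Finset.mem_union.mp he1 with he1 | he1
        · exact absurd (hall e (mem_dartCut.mpr
            ⟨he1, fun h => he2 (Finset.mem_union_left _ h), he3⟩)) he2X
        · exact mem_dartCut.mpr ⟨he1, he2X, he3⟩
    have h4 := Finset.card_le_card hsub
    rw [Finset.card_insert_of_notMem] at h4
    · omega
    · intro h
      exact (mem_dartCut.mp h).2.1 (Finset.mem_union_left _ hd₁'.1)
  obtain ⟨mW, hmW⟩ := exists_piece G W d₁.2 d₂.2 (hlink d₁ hd₁) (hlink d₂ hd₂) (by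
    intro κ p
    rcases Nat.lt_or_ge 1 (W.image p).card with hq | hq
    swap
    · omega
    have h1 := sum_card_dartCut_parts G W p
    have h2 : ∀ c ∈ W.image p, 3 ≤ (dartCut G (W.filter fun v => p v = c)).card :=
      fun c hc => hthree _ (part_ssubset hq c) (part_nonempty hc)
    by_cases hp : p d₁.2 = p d₂.2
    · have hc₀ : p d₁.2 ∈ W.image p := Finset.mem_image_of_mem _ (hlink d₁ hd₁)
      have h3 := hfour _ (part_ssubset hq (p d₁.2))
        (Finset.mem_filter.mpr ⟨hlink d₁ hd₁, rfl⟩)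
        (Finset.mem_filter.mpr ⟨hlink d₂ hd₂, hp.symm⟩)
      have h4 : ∑ c ∈ W.image p, 3 <
          ∑ c ∈ W.image p, (dartCut G (W.filter fun v => p v = c)).card :=
        Finset.sum_lt_sum h2 ⟨_, hc₀, h3⟩
      rw [Finset.sum_const, smul_eq_mul] at h4
      rw [if_pos hp]
      omega
    · have h4 := Finset.sum_le_sum h2
      rw [Finset.sum_const, smul_eq_mul] at h4
      rw [if_neg hp]
      omega) d₁.2 x (hlink d₁ hd₁) hxW
  obtain ⟨m', hm'⟩ := ih U'.card (by rw [← hn]; exact Finset.card_lt_card hU'U) U' rfl hsU' hU'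
    d₁.1 hd₁'.1 (Or.inr ⟨d₁.2, hd₁'.2.1, hd₁'.2.2⟩)
  have hUW : U' ∪ W = U := Finset.union_sdiff_of_subset hU'U.1
  rw [← hUW]
  exact glue_piece Finset.disjoint_sdiff ⟨hd₁'.1, hlink d₁ hd₁, hd₁'.2.2⟩
    ⟨hd₂'.1, hlink d₂ hd₂, hd₂'.2.2⟩ hm' hmW

/-! ### From pieces to tours -/

lemma connected_of_connOn {V : Type*} [Fintype V] (v₀ : V) {m : Sym2 V → ℕ}
    (h : ConnOn Finset.univ fun a b => m s(a, b) ≠ 0) :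
    (SimpleGraph.fromEdgeSet {e : Sym2 V | m e ≠ 0}).Connected := by
  rw [SimpleGraph.connected_iff_exists_forall_reachable]
  refine ⟨v₀, ?_⟩
  by_contra hcon
  push Not at hcon
  obtain ⟨w, hw⟩ := hcon
  obtain ⟨a, ha, b, -, hb, hab⟩ := h (Finset.univ.filter fun v =>
      (SimpleGraph.fromEdgeSet {e : Sym2 V | m e ≠ 0}).Reachable v₀ v) (Finset.subset_univ _)
    ⟨v₀, by simp⟩ (by
      intro h
      have := Finset.mem_univ w
      rw [← h] at this
      exact hw (Finset.mem_filter.mp this).2)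
  simp only [Finset.mem_filter, Finset.mem_univ, true_and] at ha hb
  apply hb
  refine ha.trans (SimpleGraph.Adj.reachable ?_)
  rw [SimpleGraph.fromEdgeSet_adj]
  refine ⟨hab, ?_⟩
  rintro rfl
  exact hb ha

lemma dartCut_nonempty {V : Type*} [Fintype V] {G : SimpleGraph V} (hG : G.Connected)
    (X : Finset V) (hX : X.Nonempty) (hX' : X ≠ Finset.univ) : (dartCut G X).Nonempty := by
  obtain ⟨u, hu⟩ := hX
  obtain ⟨v, hv⟩ : ∃ v, v ∉ X := by
    by_contra hall
    push Not at hall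
    exact hX' (Finset.eq_univ_iff_forall.mpr hall)
  obtain ⟨w⟩ := hG.preconnected u v
  obtain ⟨d, -, hd1, hd2⟩ := w.exists_boundary_dart (X : Set V) hu hv
  exact ⟨(d.fst, d.snd), mem_dartCut.mpr ⟨hd1, hd2, d.adj⟩⟩

lemma isSTTour_of {V : Type*} [Fintype V] {G : SimpleGraph V} {s t : V} (hst : s ≠ t)
    {m : Sym2 V → ℕ} (hsupp : ∀ e, e ∉ G.edgeSet → m e = 0)
    (hconn : ConnOn Finset.univ fun a b => m s(a, b) ≠ 0)
    (hdeg : ∀ v, (edgeDegree m v : ZMod 2) =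
      (if v = s then 1 else 0) + (if v = t then 1 else 0)) : IsSTTour s t m := by
  refine ⟨fun e he => hsupp e fun h => G.not_isDiag_of_mem_edgeSet h he,
    connected_of_connOn s hconn, fun v => ?_⟩
  rw [← ZMod.natCast_eq_one_iff_odd, hdeg]
  by_cases h1 : v = s
  · have h2 : v ≠ t := fun h => hst (h1.symm.trans h)
    simp [h1, hst]
  · by_cases h2 : v = t
    · simp [h2, hst.symm]
    · simp [h1, h2]

/-- If every cut of a connected graph `G` that is not an `s`–`t` cut has at least three
edges, then the all-ones vector on the edges of `G` is a convex combination of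
`{s,t}`-tours. -/
theorem all_ones_convex_combination_of_tours {V : Type*} [Fintype V]
    (G : SimpleGraph V) (hG : G.Connected) (s t : V) (hst : s ≠ t)
    (hcut : ∀ U : Finset V, U.Nonempty → U ≠ Finset.univ →
      (U ∩ {s, t}).card ≠ 1 → 3 ≤ (graphCut G U).card) :
    ∃ (N : ℕ) (m : Fin N → Sym2 V → ℕ) (lam : Fin N → ℝ),
      (∀ k, IsSTTour s t (m k) ∧ ∀ e : Sym2 V, e ∉ G.edgeSet → m k e = 0) ∧
      (∀ k, 0 < lam k) ∧ (∑ k : Fin N, lam k = 1) ∧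
      (∀ e ∈ G.edgeSet, ∑ k : Fin N, lam k * (m k e : ℝ) = 1) := by
  have hcut' : ∀ X : Finset V, X.Nonempty → X ≠ Finset.univ → (s ∈ X ↔ t ∈ X) →
      3 ≤ (dartCut G X).card := by
    intro X hX hX' hiff
    refine (hcut X hX hX' ?_).trans (card_graphCut_le G X)
    by_cases hs : s ∈ X
    · have ht := hiff.mp hs
      have : X ∩ {s, t} = {s, t} := by
        apply Finset.inter_eq_right.mpr
        intro v hv
        rcases Finset.mem_insert.mp hv with rfl | hv
        · exact hs
        · rw [Finset.mem_singleton.mp hv]; exact ht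
      rw [this, Finset.card_pair hst]
      decide
    · have ht : t ∉ X := fun h => hs (hiff.mpr h)
      have : X ∩ {s, t} = ∅ := by
        ext v
        simp only [Finset.mem_inter, Finset.mem_insert, Finset.mem_singleton,
          Finset.notMem_empty, iff_false]
        rintro ⟨hv, rfl | rfl⟩
        · exact hs hv
        · exact ht hv
      simp [this]
  obtain ⟨m, hm⟩ := exists_narrow_piece hcut' (dartCut_nonempty hG) _ Finset.univ rfl
    (Finset.mem_univ s) (by simp [dartCut]) t (Finset.mem_univ t) (Or.inl rfl)
  have hsupp : ∀ e, e ∉ G.edgeSet → m e = 0 := by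
    intro e he
    induction e with
    | _ a b =>
    by_contra h
    exact he (hm.supp a b h).2.2
  let m' : Sym2 V → ℕ := fun e => if e ∈ G.edgeSet then 2 - m e else 0
  have hsupp' : ∀ e, e ∉ G.edgeSet → m' e = 0 := fun e he => by simp [m', he]
  have hconn' : ConnOn Finset.univ fun a b => m' s(a, b) ≠ 0 := by
    intro X hX hne hX'
    obtain ⟨a, ha, b, hb, hbX, hab, hlt⟩ := hm.coconn X hX hne hX' Iff.rfl
    refine ⟨a, ha, b, hb, hbX, ?_⟩
    have : s(a, b) ∈ G.edgeSet := hab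
    simp only [m', if_pos this]
    omega
  have hadd : ∀ e ∈ G.edgeSet, m e + m' e = 2 := by
    intro e he
    have := hm.le_two e
    simp only [m', if_pos he]
    omega
  have hdeg' : ∀ v, (edgeDegree m' v : ZMod 2) =
      (if v = s then 1 else 0) + (if v = t then 1 else 0) := by
    intro v
    have h1 : (edgeDegree (fun e => m e + m' e) v : ZMod 2) = 0 := by
      rw [edgeDegree]
      push_cast
      apply Finset.sum_eq_zero
      intro e _
      by_cases he : e ∈ G.edgeSet
      · have := hadd e he
        exact_mod_cast congrArg (Nat.cast : ℕ → ZMod 2) this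
      · simp [hsupp e he, hsupp' e he]
    rw [edgeDegree_add] at h1
    push_cast at h1
    rw [← hm.deg v]
    exact (CharTwo.add_eq_zero.mp h1).symm
  refine ⟨2, ![m, m'], fun _ => 1 / 2, ?_, fun _ => by norm_num, by norm_num, ?_⟩
  · intro k
    fin_cases k
    · exact ⟨isSTTour_of hst hsupp hm.conn hm.deg, hsupp⟩
    · exact ⟨isSTTour_of hst hsupp' hconn' hdeg', hsupp'⟩
  · intro e he
    have h : (m e : ℝ) + m' e = 2 := by exact_mod_cast hadd e he
    rw [Fin.sum_univ_two]
    simp only [Matrix.cons_val_zero, Matrix.cons_val_one]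
    linarith
end
end
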